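/- Let V ⊆ ℂ^N be a strictly convex domain and let U ⊆ ℂ^N be a domain intersecting bV. Then for every ε > 0 there exist finitely many pairwise disjoint closed caps Γ_1, …, Γ_n of V contained entirely in U ∩ cl(V) such that m((U ∩ bV) \ Γ) < ε, where Γ = Γ_1 ∪ ⋯ ∪ Γ_n and m is the (2N−1)-dimensional Hausdorff measure. Moreover, for any polynomially convex compact set K ⊆ V with Γ ∩ K = ∅, the set Γ ∪ K is polynomially convex. -/

import Mathlib

open Set Filter Topology Metric MeasureTheory
open scoped ENNReal NNReal InnerProductSpace ComplexConjugate

noncomputable section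

/-- `ℂ^N` with the Euclidean structure. -/
abbrev EN (N : ℕ) := EuclideanSpace ℂ (Fin N)

instance {N : ℕ} : MeasurableSpace (EN N) := borel _
instance {N : ℕ} : BorelSpace (EN N) := ⟨rfl⟩

/-- A domain: a nonempty open connected subset. -/
def IsDomainSet {N : ℕ} (D : Set (EN N)) : Prop := IsOpen D ∧ IsConnected D

/-- `u` is plurisubharmonic on `D`: upper semicontinuous on `D`, and its restriction to
every complex affine line satisfies the sub-mean value inequality on every closed disc
(of that line) contained in `D`. -/
def PlurisubharmonicOn {N : ℕ} (u : EN N → ℝ) (D : Set (EN N)) : Prop :=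
  UpperSemicontinuousOn u D ∧
  ∀ (a b : EN N) (t₀ : ℂ) (r : ℝ), 0 < r →
    (fun t : ℂ => a + t • b) '' Metric.closedBall t₀ r ⊆ D →
    u (a + t₀ • b) ≤ (2 * Real.pi)⁻¹ *
      ∫ θ in (0:ℝ)..(2 * Real.pi), u (a + (t₀ + r * Complex.exp (θ * Complex.I)) • b)

/-- `D` is a pseudoconvex domain: a domain carrying a continuous plurisubharmonic
exhaustion function. -/
def Pseudoconvex {N : ℕ} (D : Set (EN N)) : Prop :=
  IsDomainSet D ∧ ∃ u : EN N → ℝ, ContinuousOn u D ∧ PlurisubharmonicOn u D ∧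
    ∀ c : ℝ, IsCompact (closure {z ∈ D | u z < c}) ∧ closure {z ∈ D | u z < c} ⊆ D

/-- The space `𝒪(D)` of holomorphic functions on `D`, as a submodule of `ℂ^N → ℂ`. -/
def Hol {N : ℕ} (D : Set (EN N)) : Submodule ℂ (EN N → ℂ) where
  carrier := {f | DifferentiableOn ℂ f D}
  add_mem' hf hg := hf.add hg
  zero_mem' := differentiableOn_const 0
  smul_mem' c f hf := hf.const_smul c

/-- The topology of uniform convergence on compact subsets of `D`, on `𝒪(D)`. -/
instance holTopology {N : ℕ} (D : Set (EN N)) : TopologicalSpace ↥(Hol D) :=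
  TopologicalSpace.induced
    (fun f => UniformOnFun.ofFun {K : Set (EN N) | K ⊆ D ∧ IsCompact K} f.1)
    inferInstance

/-- A set is residual if it contains a dense `G_δ` set. -/
def ResidualIn {X : Type*} [TopologicalSpace X] (S : Set X) : Prop :=
  ∃ T : Set X, T ⊆ S ∧ IsGδ T ∧ Dense T

/-- `S` is densely lineable: `S ∪ {0}` contains a dense vector subspace. -/
def DenselyLineableIn {X : Type*} [TopologicalSpace X] [AddCommMonoid X] [Module ℂ X]
    (S : Set X) : Prop :=
  ∃ p : Submodule ℂ X, Dense (p : Set X) ∧ (p : Set X) ⊆ S ∪ {0}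

/-- `S` is spaceable: `S ∪ {0}` contains a closed infinite-dimensional vector subspace. -/
def SpaceableIn {X : Type*} [TopologicalSpace X] [AddCommMonoid X] [Module ℂ X]
    (S : Set X) : Prop :=
  ∃ p : Submodule ℂ X, IsClosed (p : Set X) ∧ ¬ Module.Finite ℂ ↥p ∧ (p : Set X) ⊆ S ∪ {0}

/-- A finite length path to `bD`: continuous and piecewise `C¹` on `[0,1)`, with values in `D`,
finite length (total variation), converging to a boundary point of `D` as `r → 1`. -/
def FiniteLengthPathTo {N : ℕ} (D : Set (EN N)) (γ : ℝ → EN N) : Prop :=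
  MapsTo γ (Ico (0:ℝ) 1) D ∧ ContinuousOn γ (Ico (0:ℝ) 1) ∧
  (∃ u : ℕ → ℝ, u 0 = 0 ∧ StrictMono u ∧ (∀ n, u n < 1) ∧ Tendsto u atTop (𝓝 1) ∧
    ∀ n, ContDiffOn ℝ 1 γ (Icc (u n) (u (n+1)))) ∧
  eVariationOn γ (Ico (0:ℝ) 1) < ⊤ ∧
  ∃ ζ ∈ frontier D, Tendsto γ (𝓝[<] (1:ℝ)) (𝓝 ζ)

/-- The set of `f ∈ 𝒪(D)` with maximal cluster set along every finite length path to `bD`. -/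
def WildSet {N : ℕ} (D : Set (EN N)) : Set ↥(Hol D) :=
  {f | ∀ γ : ℝ → EN N, FiniteLengthPathTo D γ → ∀ c : ℂ,
    ∃ r : ℕ → ℝ, (∀ n, r n ∈ Ico (0:ℝ) 1) ∧ Tendsto r atTop (𝓝 1) ∧
      Tendsto (fun n => f.1 (γ (r n))) atTop (𝓝 c)}

/-- The `𝒪(D)`-hull of `K`. -/
def holHull {N : ℕ} (D K : Set (EN N)) : Set (EN N) :=
  {z ∈ D | ∀ φ : EN N → ℂ, DifferentiableOn ℂ φ D → ‖φ z‖ ≤ ⨆ w ∈ K, ‖φ w‖}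

/-- `K` is `𝒪(D)`-convex. -/
def HolConvexIn {N : ℕ} (D K : Set (EN N)) : Prop := K ⊆ D ∧ holHull D K = K

/-- The polynomial hull of a compact subset of `ℂ`. -/
def polyHull1 (E : Set ℂ) : Set ℂ :=
  {z | ∀ p : Polynomial ℂ, ‖p.eval z‖ ≤ ⨆ w ∈ E, ‖p.eval w‖}

/-- The polynomial hull of a subset of `ℂ^N`. -/
def polyHull {N : ℕ} (E : Set (EN N)) : Set (EN N) :=
  {z | ∀ p : MvPolynomial (Fin N) ℂ,
    ‖MvPolynomial.eval (fun j => z j) p‖ ≤ ⨆ w ∈ E, ‖MvPolynomial.eval (fun j => w j) p‖}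

/-- `E ⊆ ℂ^N` is polynomially convex. -/
def PolynomiallyConvex {N : ℕ} (E : Set (EN N)) : Prop := polyHull E = E

/-- The (real) Hessian of `ρ` at `p`, applied to the pair `(v, w)`. -/
def Hess {N : ℕ} (ρ : EN N → ℝ) (p v w : EN N) : ℝ :=
  fderiv ℝ (fderiv ℝ ρ) p v w

/-- The Levi form `∑_{j,k} ∂²ρ/∂z_j∂z̄_k (p) w_j w̄_k`, expressed through the real Hessian. -/
def LeviForm {N : ℕ} (ρ : EN N → ℝ) (p w : EN N) : ℝ :=
  (Hess ρ p w w + Hess ρ p (Complex.I • w) (Complex.I • w)) / 4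

/-- `w` belongs to the complex tangent space `{w : ∑_j ∂ρ/∂z_j(p) w_j = 0}` at `p`. -/
def ComplexTangent {N : ℕ} (ρ : EN N → ℝ) (p w : EN N) : Prop :=
  fderiv ℝ ρ p w = 0 ∧ fderiv ℝ ρ p (Complex.I • w) = 0

/-- `ρ` is a `C²` defining function for `D` on the open neighborhood `V` of `cl D`. -/
def IsDefiningFunctionOn {N : ℕ} (D : Set (EN N)) (ρ : EN N → ℝ) (V : Set (EN N)) : Prop :=
  IsOpen V ∧ closure D ⊆ V ∧ ContDiffOn ℝ 2 ρ V ∧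
  D = {z ∈ V | ρ z < 0} ∧ ∀ p ∈ frontier D, fderiv ℝ ρ p ≠ 0

/-- `D` is a strictly pseudoconvex domain with defining function `ρ`. -/
def StrictPSCWith {N : ℕ} (D : Set (EN N)) (ρ : EN N → ℝ) : Prop :=
  IsDomainSet D ∧ Bornology.IsBounded D ∧ (∃ V, IsDefiningFunctionOn D ρ V) ∧
  ∀ p ∈ frontier D, ∀ w : EN N, w ≠ 0 → ComplexTangent ρ p w → 0 < LeviForm ρ p w

/-- `D` is a strictly pseudoconvex domain. -/
def StrictlyPseudoconvex {N : ℕ} (D : Set (EN N)) : Prop := ∃ ρ, StrictPSCWith D ρ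

/-- `ρ` and `σ` are at `C²`-distance `< ε` on `V`. -/
def C2DistLt {N : ℕ} (V : Set (EN N)) (ρ σ : EN N → ℝ) (ε : ℝ) : Prop :=
  ∀ z ∈ V, |ρ z - σ z| + ‖fderiv ℝ ρ z - fderiv ℝ σ z‖ +
    ‖fderiv ℝ (fderiv ℝ ρ) z - fderiv ℝ (fderiv ℝ σ) z‖ < ε

/-- The standing assumptions on the map `γ : bD × [0,1] → cl D`: it is `C^k`, maps
`bD × [0,1)` into `D`, satisfies `γ(x,1) = x`, and the curves `r ↦ γ(x,r)` hit `bD`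
transversally at `x` (the `r`-derivative at `1` is not annihilated by `dρ(x)`,
i.e. it is not tangent to `bD` at `x`). -/
def GammaMap {N : ℕ} (D : Set (EN N)) (ρ : EN N → ℝ) (γ : EN N × ℝ → EN N) (k : ℕ) : Prop :=
  ContDiffOn ℝ k γ ((frontier D) ×ˢ Icc (0:ℝ) 1) ∧
  (∀ x ∈ frontier D, ∀ r ∈ Ico (0:ℝ) 1, γ (x, r) ∈ D) ∧
  (∀ x ∈ frontier D, γ (x, 1) = x) ∧
  ∀ x ∈ frontier D, fderiv ℝ ρ x (derivWithin (fun r => γ (x, r)) (Icc (0:ℝ) 1) 1) ≠ 0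

/-- Assumption (†): for all `r` close enough to `1`, `bD_r := γ(bD × {r})` bounds a strictly
pseudoconvex domain `D_r ⊆ D` whose defining function converges to `ρ` in `C²` norm on a
neighborhood `V` of `cl D` as `r → 1`. -/
def Dagger {N : ℕ} (D : Set (EN N)) (ρ : EN N → ℝ) (γ : EN N × ℝ → EN N) : Prop :=
  ∃ V : Set (EN N), IsOpen V ∧ closure D ⊆ V ∧
  ∃ (Dr : ℝ → Set (EN N)) (ρr : ℝ → EN N → ℝ),
    ∀ ε > 0, ∃ r₀ ∈ Ico (0:ℝ) 1, ∀ r ∈ Ioo r₀ 1,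
      StrictPSCWith (Dr r) (ρr r) ∧ Dr r ⊆ D ∧
      frontier (Dr r) = (fun x => γ (x, r)) '' frontier D ∧
      C2DistLt V (ρr r) ρ ε

/-- The `(2N-1)`-dimensional Hausdorff (surface) measure on `bD`. -/
def surfMeasure {N : ℕ} (D : Set (EN N)) : Measure (EN N) :=
  (Measure.hausdorffMeasure (2 * (N:ℝ) - 1)).restrict (frontier D)

/-- The normalized surface measure on `bD`. -/
def surfMeasureNorm {N : ℕ} (D : Set (EN N)) : Measure (EN N) :=
  ((Measure.hausdorffMeasure (2 * (N:ℝ) - 1) : Measure (EN N)) (frontier D))⁻¹ • surfMeasure D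

/-- The set `𝒲((r_j))` of `f ∈ 𝒪(D)` such that every measurable function on `bD` is an
a.e. limit of `f ∘ γ(·, r_{j_k})` along some subsequence of `(r_j)`. -/
def WSet {N : ℕ} (D : Set (EN N)) (γ : EN N × ℝ → EN N) (r : ℕ → ℝ) : Set ↥(Hol D) :=
  {f | ∀ h : EN N → ℂ, Measurable h → ∃ φ : ℕ → ℕ, StrictMono φ ∧
    ∀ᵐ x ∂ surfMeasure D, Tendsto (fun k => f.1 (γ (x, r (φ k)))) atTop (𝓝 (h x))}

/-- `Γ` is a closed cap of a convex set `V`: the closure of a connected component of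
`V \ H` for some real affine hyperplane `H` (for convex `V`, a nonempty open half-space
slice of `V`). -/
def IsClosedCap {N : ℕ} (V : Set (EN N)) (Γ : Set (EN N)) : Prop :=
  ∃ (l : EN N →L[ℝ] ℝ) (c : ℝ), l ≠ 0 ∧ (V ∩ {z | c < l z}).Nonempty ∧
    Γ = closure (V ∩ {z | c < l z})

/-- `V` is a strictly convex domain: a bounded convex domain with `C²` boundary whose
defining function has positive definite real Hessian on the real tangent space. -/
def StrictlyConvexDomain {N : ℕ} (V : Set (EN N)) : Prop :=
  IsDomainSet V ∧ Bornology.IsBounded V ∧ Convex ℝ V ∧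
  ∃ (ρ : EN N → ℝ) (W : Set (EN N)), IsDefiningFunctionOn V ρ W ∧
    ∀ p ∈ frontier V, ∀ w : EN N, w ≠ 0 → fderiv ℝ ρ p w = 0 → 0 < Hess ρ p w w

/-- The defining function `‖z‖² - 1` of the unit ball. -/
def ballRho {N : ℕ} : EN N → ℝ := fun z => ‖z‖ ^ 2 - 1

/-- The normalized surface measure on the unit sphere of `ℂ^N`. -/
def sphMeasure (N : ℕ) : Measure (EN N) :=
  ((Measure.hausdorffMeasure (2 * (N:ℝ) - 1) : Measure (EN N)) (Metric.sphere 0 1))⁻¹ •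
    (Measure.hausdorffMeasure (2 * (N:ℝ) - 1)).restrict (Metric.sphere 0 1)

/-- `v` is a weight: increasing on `[0,∞)`, nonnegative, and tending to `∞`. -/
def IsWeight (v : ℝ → ℝ) : Prop :=
  (∀ x ∈ Ici (0:ℝ), 0 ≤ v x) ∧ MonotoneOn v (Ici 0) ∧ Tendsto v atTop atTop

/-- The norm `‖f‖ = sup_{z ∈ 𝔹_N} |f z| / v(|z|)` of `H_v^0`. -/
def hvNorm {N : ℕ} (v : ℝ → ℝ) (f : EN N → ℂ) : ℝ :=
  ⨆ z ∈ Metric.ball (0:EN N) 1, ‖f z‖ / v ‖z‖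

/-- Membership in `H_v^0`: `f` is holomorphic on `𝔹_N` and `sup_{|z|=r} |f z| / v(r) → 0`
as `r → 1⁻`. -/
def MemHv {N : ℕ} (v : ℝ → ℝ) (f : EN N → ℂ) : Prop :=
  DifferentiableOn ℂ f (Metric.ball 0 1) ∧
  Tendsto (fun r : ℝ => ⨆ z ∈ Metric.sphere (0:EN N) r, ‖f z‖ / v r) (𝓝[<] 1) (𝓝 0)

/-- `S` contains, relatively to `H_v^0` with its norm topology, a dense `G_δ` subset:
there are countably many relatively norm-open sets `U n` whose intersection with `H_v^0`
is norm-dense in `H_v^0` and contained in `S`. -/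
def ResidualInHv {N : ℕ} (v : ℝ → ℝ) (S : Set (EN N → ℂ)) : Prop :=
  ∃ U : ℕ → Set (EN N → ℂ),
    (∀ n, ∀ f, MemHv v f → f ∈ U n →
      ∃ δ > 0, ∀ g, MemHv v g → hvNorm v (g - f) < δ → g ∈ U n) ∧
    (∀ f, MemHv v f → ∀ δ > 0, ∃ g, MemHv v g ∧ (∀ n, g ∈ U n) ∧ hvNorm v (g - f) < δ) ∧
    ∀ f, MemHv v f → (∀ n, f ∈ U n) → f ∈ S

/-- `S` is densely lineable in `H_v^0`: `S ∪ {0}` contains a norm-dense subspace of `H_v^0`. -/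
def DenselyLineableInHv {N : ℕ} (v : ℝ → ℝ) (S : Set (EN N → ℂ)) : Prop :=
  ∃ p : Submodule ℂ (EN N → ℂ), (↑p ⊆ {f : EN N → ℂ | MemHv v f}) ∧ (↑p ⊆ S ∪ {0}) ∧
    ∀ f, MemHv v f → ∀ δ > 0, ∃ g ∈ p, hvNorm v (g - f) < δ

/-- `S` is spaceable in `H_v^0`: `S ∪ {0}` contains a norm-closed infinite-dimensional
subspace of `H_v^0`. -/
def SpaceableInHv {N : ℕ} (v : ℝ → ℝ) (S : Set (EN N → ℂ)) : Prop :=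
  ∃ p : Submodule ℂ (EN N → ℂ), (↑p ⊆ {f : EN N → ℂ | MemHv v f}) ∧ (↑p ⊆ S ∪ {0}) ∧
    ¬ Module.Finite ℂ ↥p ∧
    ∀ f, MemHv v f → (∀ δ > 0, ∃ g ∈ p, hvNorm v (g - f) < δ) → f ∈ p

/-- The standing assumptions on the family `{γ_z : z ∈ 𝔹_N}`: each `γ_z` is a `C¹` map
`b𝔹_N × [0,1] → cl 𝔹_N` into `𝔹_N` for `r < 1` with `γ_z(x,1) = x`, transversal approach
and (†), with joint continuity of `(z,x,r) ↦ γ_z(x,r)` and of `(z,r) ↦ ∂γ_z(x,r)/∂r`. -/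
def BallGammaFamily {N : ℕ} (γ : EN N → EN N × ℝ → EN N) : Prop :=
  (∀ z ∈ Metric.ball (0:EN N) 1,
    GammaMap (Metric.ball 0 1) ballRho (γ z) 1 ∧ Dagger (Metric.ball 0 1) ballRho (γ z)) ∧
  ContinuousOn (fun p : EN N × (EN N × ℝ) => γ p.1 p.2)
    (Metric.ball 0 1 ×ˢ (Metric.sphere 0 1 ×ˢ Icc (0:ℝ) 1)) ∧
  ∀ x ∈ Metric.sphere (0:EN N) 1,
    ContinuousOn (fun p : EN N × ℝ => derivWithin (fun r => γ p.1 (x, r)) (Icc (0:ℝ) 1) p.2)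
      (Metric.ball 0 1 ×ˢ Icc (0:ℝ) 1)

/-- The set of `f` such that for every `z ∈ 𝔹_N`, every measurable function on `b𝔹_N` is an
a.e. limit of `f ∘ γ_z(·, r_{j_k})` along some subsequence of `(r_j)`. -/
def WSetHv {N : ℕ} (γ : EN N → EN N × ℝ → EN N) (r : ℕ → ℝ) : Set (EN N → ℂ) :=
  {f | ∀ z ∈ Metric.ball (0:EN N) 1, ∀ h : EN N → ℂ, Measurable h →
    ∃ φ : ℕ → ℕ, StrictMono φ ∧
      ∀ᵐ x ∂ sphMeasure N, Tendsto (fun k => f (γ z (x, r (φ k)))) atTop (𝓝 (h x))}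

/-- The set `E_L^* = {γ_z(x,r) : x ∈ E, r ∈ [0,1], z ∈ L}`. -/
def EStarSet {N : ℕ} (γ : EN N → EN N × ℝ → EN N) (L E : Set (EN N)) : Set (EN N) :=
  {w | ∃ z ∈ L, ∃ x ∈ E, ∃ r ∈ Icc (0:ℝ) 1, w = γ z (x, r)}

/-- The Korányi approach region `D_α(x)`. -/
def Koranyi {N : ℕ} (α : ℝ) (x : EN N) : Set (EN N) :=
  {z ∈ Metric.ball (0:EN N) 1 | ‖1 - (⟪x, z⟫_ℂ : ℂ)‖ < α / 2 * (1 - ‖z‖ ^ 2)}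

/-- `h` has a `K`-limit at `x`: for every `α > 1` the values of `h` converge along every
sequence in `D_α(x)` converging to `x`. -/
def HasKLimitAt {N : ℕ} (h : EN N → ℂ) (x : EN N) : Prop :=
  ∀ α > (1:ℝ), ∃ c : ℂ, ∀ z : ℕ → EN N, (∀ i, z i ∈ Koranyi α x) →
    Tendsto z atTop (𝓝 x) → Tendsto (fun i => h (z i)) atTop (𝓝 c)

/-- The circle `bL_x = L_x ∩ b𝔹_N` cut out on the complex line through `x` and `0`. -/
def lineCircle {N : ℕ} (x : EN N) : Set (EN N) :=
  {z | ∃ t : ℂ, z = t • x} ∩ Metric.sphere 0 1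

end

/-!
Near a boundary point `y` of a strictly convex domain, the height of a boundary point `z` below the
tangent hyperplane at `y` is comparable to `‖z - y‖ ^ 2`, uniformly in `y` by compactness. Hence the
closed cap of depth comparable to `r ^ 2` at `y` is contained in the ball of radius `r` and contains
all boundary points in a concentric ball of comparable radius. As the boundary is Ahlfors regular
of dimension `2N - 1`, being locally a level set with nonvanishing derivative, these caps satisfy
the doubling hypothesis of Vitali's covering theorem, so finitely many disjoint ones inside `U`
exhaust `U ∩ bV` up to measure `ε`.

A closed cap is separated by a real hyperplane from each compact subset of `cl V` disjoint from it,
so polynomial convexity follows, one cap at a time, from the fact that the hull of `X ∪ Y` is the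
union of the hulls of `X` and `Y` when `X` and `Y` lie on opposite sides of a hyperplane
`re L = a`. To see this, let `z` be a point of the hull with `re L z > a`, and let
`u = exp (a - L)`, so that `‖u‖ < 1` exactly on the side of `z` and of `X`. In the closure of the
polynomials on `X ∪ Y ∪ {z}`, the boundary of the spectrum of `L` lies in the range of `L`, so the
whole spectrum misses the line `re = a` and `1 + u ^ k` is invertible. Testing the hull condition on
`g / (1 + u ^ k)` with `k → ∞` discards `Y`.
-/

section UniformAlgebra

theorem spectrum_exp_subset {B : Type*} [NormedCommRing B] [NormedAlgebra ℂ B] [CompleteSpace B]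
    (y : B) : spectrum ℂ (NormedSpace.exp y) ⊆ Complex.exp '' spectrum ℂ y := by
  let _ : NormedAlgebra ℚ B := NormedAlgebra.restrictScalars ℚ ℂ B
  intro μ hμ
  obtain ⟨χ, rfl⟩ := WeakDual.CharacterSpace.mem_spectrum_iff_exists.1 hμ
  refine ⟨χ y, WeakDual.CharacterSpace.mem_spectrum_iff_exists.2 ⟨χ, rfl⟩, ?_⟩
  rw [Complex.exp_eq_exp_ℂ]
  exact (NormedSpace.map_exp χ (map_continuous χ) y).symm

theorem isUnit_one_add_pow {B : Type*} [Ring B] [Algebra ℂ B] {u : B}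
    (hu : Disjoint (spectrum ℂ u) (sphere 0 1)) {k : ℕ} (hk : 0 < k) :
    IsUnit (1 + u ^ k) := by
  have h_neg_one : (-1 : ℂ) ∉ spectrum ℂ (u ^ k) := by
    rw [spectrum.map_pow_of_pos u hk]
    rintro ⟨μ, hμ, hμk : μ ^ k = -1⟩
    refine disjoint_left.1 hu hμ (mem_sphere_zero_iff_norm.2 ?_)
    refine (pow_eq_one_iff_of_nonneg (norm_nonneg μ) hk.ne').1 ?_
    rw [← norm_pow, hμk, norm_neg, norm_one]
  rwa [spectrum.notMem_iff, map_neg, map_one, ← neg_add', IsUnit.neg_iff] at h_neg_one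

theorem exists_mem_frontier_re_eq {S : Set ℂ} (hS : IsCompact S) {z : ℂ} (hz : z ∈ S) :
    ∃ w ∈ frontier S, w.re = z.re := by
  obtain ⟨w, ⟨hwS, hw⟩, hw_top⟩ :=
    (hS.inter_right (isClosed_eq Complex.continuous_re continuous_const)).exists_isMaxOn
      ⟨z, hz, rfl⟩ Complex.continuous_im.continuousOn
  refine ⟨w, ⟨subset_closure hwS, fun hw_int => ?_⟩, hw⟩
  obtain ⟨r, hr, hball⟩ := Metric.mem_nhds_iff.1 (mem_interior_iff_mem_nhds.1 hw_int)
  have h_above : w + (r / 2 : ℝ) * Complex.I ∈ S := hball (by simp [abs_of_pos hr, hr])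
  have h_le := hw_top ⟨h_above, by simpa using hw⟩
  simp only [mem_ofPred_eq, Complex.add_im, Complex.mul_I_im, Complex.ofReal_re] at h_le
  linarith

variable {X : Type*} [TopologicalSpace X] [CompactSpace X] {A : Subalgebra ℂ C(X, ℂ)}

theorem re_ne_of_mem_spectrum (hA : IsClosed (A : Set C(X, ℂ))) {f : A} {a : ℝ}
    (hf : ∀ x, ((f : C(X, ℂ)) x).re ≠ a) {z : ℂ} (hz : z ∈ spectrum ℂ f) : z.re ≠ a := by
  have : CompleteSpace A := hA.completeSpace_coe
  obtain ⟨w, hw, hwz⟩ := exists_mem_frontier_re_eq (spectrum.isCompact f) hz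
  -- A boundary point of the spectrum in `A` stays in the spectrum in `C(X, ℂ)`.
  have hw_range : w ∈ range (f : C(X, ℂ)) := by
    rw [← ContinuousMap.spectrum_eq_range]
    exact Subalgebra.frontier_spectrum A f hw
  obtain ⟨x, rfl⟩ := hw_range
  exact hwz ▸ hf x

theorem exp_coe_apply (hA : IsClosed (A : Set C(X, ℂ))) (f : A) (x : X) :
    (NormedSpace.exp f : A).1 x = Complex.exp (f.1 x) := by
  have : CompleteSpace A := hA.completeSpace_coe
  let _ : NormedAlgebra ℚ A := NormedAlgebra.restrictScalars ℚ ℂ A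
  rw [Complex.exp_eq_exp_ℂ]
  exact NormedSpace.map_exp ((ContinuousMap.evalAlgHom ℂ ℂ x).comp A.val)
    ((continuous_eval_const x).comp continuous_subtype_val) f

/-- The hull of `S` with respect to the algebra `A` of continuous functions on `X`: the points
at which every member of `A` is bounded by each of its nonnegative bounds on `S`. Quantifying
over bounds instead of taking a supremum makes the hull of the empty set empty. -/
def functionHull (A : Subalgebra ℂ C(X, ℂ)) (S : Set X) : Set X :=
  {z | ∀ g ∈ A, ∀ M : ℝ, 0 ≤ M → (∀ x ∈ S, ‖g x‖ ≤ M) → ‖g z‖ ≤ M}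

theorem functionHull_topologicalClosure (A : Subalgebra ℂ C(X, ℂ)) (S : Set X) :
    functionHull A.topologicalClosure S = functionHull A S := by
  refine Subset.antisymm (fun z hz g hg => hz g (A.le_topologicalClosure hg)) ?_
  intro z hz g hg M hM hgS
  refine le_of_forall_pos_le_add fun δ hδ => ?_
  obtain ⟨g', hg', hgg'⟩ := Metric.mem_closure_iff.1 hg (δ / 2) (by positivity)
  have h_close : ∀ x, ‖g x - g' x‖ ≤ δ / 2 := fun x =>
    ((g - g').norm_coe_le_norm x).trans (dist_eq_norm g g' ▸ hgg'.le)
  have hg'z : ‖g' z‖ ≤ M + δ / 2 := by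
    refine hz g' hg' _ (by positivity) fun x hx => ?_
    linarith [norm_le_norm_add_norm_sub' (g' x) (g x), norm_sub_rev (g' x) (g x), h_close x,
      hgS x hx]
  linarith [norm_le_norm_add_norm_sub' (g z) (g' z), h_close z]

theorem exists_pos_forall_le_abs_norm_sub_one {u : C(X, ℂ)} (hu : ∀ x, ‖u x‖ ≠ 1) :
    ∃ δ > 0, ∀ x, δ ≤ |‖u x‖ - 1| := by
  obtain ⟨δ, hδ, h⟩ := isCompact_univ.exists_forall_le' (f := fun x => |‖u x‖ - 1|) (a := 0)
    (by fun_prop) fun x _ => abs_pos.2 (sub_ne_zero.2 (hu x))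
  exact ⟨δ, hδ, fun x => h x (mem_univ x)⟩

theorem norm_le_max_mul_norm_one_add_pow (hA : IsClosed (A : Set C(X, ℂ))) {u g : A}
    (hu : Disjoint (spectrum ℂ u) (sphere 0 1)) {δ : ℝ} (hδ : 0 < δ) (hδ1 : δ ≤ 1)
    (hgap : ∀ x, δ ≤ |‖u.1 x‖ - 1|) {S : Set X} {z : X} (hz : z ∈ functionHull A S) {M : ℝ}
    (hM : 0 ≤ M) (hgS : ∀ x ∈ S ∩ {x | ‖u.1 x‖ < 1}, ‖g.1 x‖ ≤ M) {k : ℕ} (hk : 0 < k) :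
    ‖g.1 z‖ ≤ max (M / (1 - (1 - δ) ^ k)) (‖g‖ / ((1 + δ) ^ k - 1)) * ‖1 + u.1 z ^ k‖ := by
  have : CompleteSpace A := hA.completeSpace_coe
  obtain ⟨e, he⟩ := (isUnit_one_add_pow hu hk).exists_left_inv
  have h_mul : ∀ x, ‖e.1 x * g.1 x‖ * ‖1 + u.1 x ^ k‖ = ‖g.1 x‖ := fun x => by
    have he_apply : e.1 x * (1 + u.1 x ^ k) = 1 := by
      simpa using congrArg (fun v : A => v.1 x) he
    rw [← norm_mul, mul_right_comm, he_apply, one_mul]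
  have h_lt : (1 - δ) ^ k < 1 := pow_lt_one₀ (by linarith) (by linarith) hk.ne'
  have h_gt : 1 < (1 + δ) ^ k := one_lt_pow₀ (by linarith) hk.ne'
  rw [← h_mul z]
  gcongr
  refine hz (e.1 * g.1) (A.mul_mem e.2 g.2) _
    (le_max_of_le_left (div_nonneg hM (by linarith))) fun x hx => ?_
  rcases lt_or_ge ‖u.1 x‖ 1 with hux | hux
  · have hux_le : ‖u.1 x‖ ≤ 1 - δ := by linarith [hgap x, abs_of_neg (sub_neg.2 hux)]
    have h_denom : 1 - (1 - δ) ^ k ≤ ‖1 + u.1 x ^ k‖ := calc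
      1 - (1 - δ) ^ k ≤ ‖(1 : ℂ)‖ - ‖u.1 x ^ k‖ := by
        rw [norm_one, norm_pow]; gcongr
      _ ≤ ‖1 + u.1 x ^ k‖ := norm_sub_le_norm_add _ _
    refine le_max_of_le_left ((le_div_iff₀ (by linarith)).2 ?_)
    calc ‖e.1 x * g.1 x‖ * (1 - (1 - δ) ^ k) ≤ ‖e.1 x * g.1 x‖ * ‖1 + u.1 x ^ k‖ := by gcongr
      _ ≤ M := h_mul x ▸ hgS x ⟨hx, hux⟩
  · have hux_ge : 1 + δ ≤ ‖u.1 x‖ := by linarith [hgap x, abs_of_nonneg (sub_nonneg.2 hux)]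
    have h_denom : (1 + δ) ^ k - 1 ≤ ‖1 + u.1 x ^ k‖ := calc
      (1 + δ) ^ k - 1 ≤ ‖u.1 x ^ k‖ - ‖(1 : ℂ)‖ := by
        rw [norm_one, norm_pow]; gcongr
      _ ≤ ‖1 + u.1 x ^ k‖ := add_comm (1 : ℂ) _ ▸ norm_sub_le_norm_add _ _
    refine le_max_of_le_right ((le_div_iff₀ (by linarith)).2 ?_)
    calc ‖e.1 x * g.1 x‖ * ((1 + δ) ^ k - 1) ≤ ‖e.1 x * g.1 x‖ * ‖1 + u.1 x ^ k‖ := by gcongr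
      _ ≤ ‖g‖ := h_mul x ▸ g.1.norm_coe_le_norm x

-- As `k → ∞`, `(1 + u ^ k)⁻¹` tends to `1` where `‖u‖ < 1` and to `0` where `‖u‖ > 1`.
theorem mem_functionHull_inter_norm_lt_one (hA : IsClosed (A : Set C(X, ℂ))) {u : A}
    (hu : Disjoint (spectrum ℂ u) (sphere 0 1)) {S : Set X} {z : X} (hz : z ∈ functionHull A S)
    (huz : ‖u.1 z‖ < 1) : z ∈ functionHull A (S ∩ {x | ‖u.1 x‖ < 1}) := by
  intro g hg M hM hgS
  have hu_norm : ∀ x, ‖u.1 x‖ ≠ 1 := fun x hx =>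
    disjoint_left.1 hu
      (AlgHom.apply_mem_spectrum ((ContinuousMap.evalAlgHom ℂ ℂ x).comp A.val) u)
      (mem_sphere_zero_iff_norm.2 hx)
  obtain ⟨δ, hδ, hgap⟩ := exists_pos_forall_le_abs_norm_sub_one hu_norm
  have hδ1 : δ ≤ 1 := by
    linarith [hgap z, abs_of_neg (sub_neg.2 huz), norm_nonneg (u.1 z)]
  have h_inner : Tendsto (fun k : ℕ => M / (1 - (1 - δ) ^ k)) atTop (𝓝 (M / (1 - 0))) :=
    tendsto_const_nhds.div ((tendsto_pow_atTop_nhds_zero_of_lt_one (sub_nonneg.2 hδ1)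
      (sub_lt_self 1 hδ)).const_sub 1) (by norm_num)
  have h_outer : Tendsto (fun k : ℕ => ‖g‖ / ((1 + δ) ^ k - 1)) atTop (𝓝 0) :=
    tendsto_const_nhds.div_atTop
      (tendsto_atTop_add_const_right _ _ (tendsto_pow_atTop_atTop_of_one_lt (by linarith)))
  have h_denom : Tendsto (fun k : ℕ => ‖1 + u.1 z ^ k‖) atTop (𝓝 1) := by
    simpa using ((tendsto_pow_atTop_nhds_zero_of_norm_lt_one huz).const_add 1).norm
  have h_lim := (h_inner.max h_outer).mul h_denom
  rw [sub_zero, div_one, max_eq_left hM, mul_one] at h_lim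
  refine ge_of_tendsto h_lim ((eventually_gt_atTop 0).mono fun k hk => ?_)
  exact norm_le_max_mul_norm_one_add_pow (g := ⟨g, hg⟩) hA hu hδ hδ1 hgap hz hM hgS hk

theorem norm_exp_neg_sub_lt_one_iff (hA : IsClosed (A : Set C(X, ℂ))) (f : A) (a : ℝ) (x : X) :
    ‖(NormedSpace.exp (algebraMap ℂ A a - f) : A).1 x‖ < 1 ↔ a < (f.1 x).re := by
  rw [exp_coe_apply hA, Complex.norm_exp, Real.exp_lt_one_iff]
  simp

theorem mem_functionHull_inter_re_gt (hA : IsClosed (A : Set C(X, ℂ))) {f : A} {a : ℝ}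
    (hf : ∀ x, (f.1 x).re ≠ a) {S : Set X} {z : X} (hz : z ∈ functionHull A S)
    (hfz : a < (f.1 z).re) : z ∈ functionHull A (S ∩ {x | a < (f.1 x).re}) := by
  have : CompleteSpace A := hA.completeSpace_coe
  have hu : Disjoint (spectrum ℂ (NormedSpace.exp (algebraMap ℂ A a - f))) (sphere 0 1) := by
    refine disjoint_left.2 fun μ hμ hμ1 => ?_
    obtain ⟨ν, hν, rfl⟩ := spectrum_exp_subset _ hμ
    rw [mem_sphere_zero_iff_norm, Complex.norm_exp, Real.exp_eq_one_iff] at hμ1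
    refine re_ne_of_mem_spectrum hA (a := 0) (fun x => ?_) hν hμ1
    simpa [sub_eq_zero] using (hf x).symm
  simpa only [norm_exp_neg_sub_lt_one_iff hA] using
    mem_functionHull_inter_norm_lt_one hA hu hz ((norm_exp_neg_sub_lt_one_iff hA f a z).2 hfz)

theorem re_le_of_mem_functionHull (hA : IsClosed (A : Set C(X, ℂ))) (f : A) {a : ℝ} {S : Set X}
    (hf : ∀ x ∈ S, (f.1 x).re ≤ a) {z : X} (hz : z ∈ functionHull A S) : (f.1 z).re ≤ a := by
  have h_norm : ∀ x, ‖(NormedSpace.exp f).1 x‖ = Real.exp (f.1 x).re := fun x => by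
    rw [exp_coe_apply hA, Complex.norm_exp]
  have h_exp := hz _ (NormedSpace.exp f).2 (Real.exp a) (Real.exp_pos a).le fun x hx => by
    rw [h_norm]
    exact Real.exp_le_exp.2 (hf x hx)
  rwa [h_norm, Real.exp_le_exp] at h_exp

end UniformAlgebra

section PolynomialHull

variable {N : ℕ}

/-- The algebra of restrictions to `Q` of the polynomials on `ℂ^N`. -/
noncomputable def polynomialAlgebra (Q : Set (EN N)) : Subalgebra ℂ C(Q, ℂ) :=
  (MvPolynomial.aeval fun j => (⟨fun z : Q => z.1 j, by fun_prop⟩ : C(Q, ℂ))).range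

theorem continuous_eval_polynomial (p : MvPolynomial (Fin N) ℂ) :
    Continuous fun z : EN N => MvPolynomial.eval (fun j => z j) p :=
  p.continuous_eval.comp (by fun_prop)

theorem mem_polynomialAlgebra {Q : Set (EN N)} {f : C(Q, ℂ)} :
    f ∈ polynomialAlgebra Q ↔
      ∃ p : MvPolynomial (Fin N) ℂ, ∀ z : Q, f z = MvPolynomial.eval (fun j => z.1 j) p := by
  have h_apply : ∀ (p : MvPolynomial (Fin N) ℂ) (z : Q),
      MvPolynomial.aeval (fun j => (⟨fun z : Q => z.1 j, by fun_prop⟩ : C(Q, ℂ))) p z =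
        MvPolynomial.eval (fun j => z.1 j) p := fun p z =>
    (MvPolynomial.comp_aeval_apply _ (ContinuousMap.evalAlgHom ℂ ℂ z) p).trans
      (DFunLike.congr_fun (MvPolynomial.coe_aeval_eq_eval _) p)
  simp only [polynomialAlgebra, AlgHom.mem_range, ContinuousMap.ext_iff, h_apply, eq_comm]

theorem exists_mem_polynomialAlgebra_re_eq (Q : Set (EN N)) (l : EN N →L[ℝ] ℝ) :
    ∃ f ∈ polynomialAlgebra Q, ∀ z : Q, (f z).re = l z := by
  let L : EN N →L[ℂ] ℂ := StrongDual.extendRCLikeₗ (𝕜 := ℂ) l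
  refine ⟨⟨fun z => L z, by fun_prop⟩, mem_polynomialAlgebra.2
    ⟨∑ j, MvPolynomial.C (L (EuclideanSpace.single j 1)) * MvPolynomial.X j, fun z => ?_⟩,
    fun z => StrongDual.re_extendRCLike_apply (𝕜 := ℂ) l z.1⟩
  have hz : z.1 = ∑ j, z.1 j • (EuclideanSpace.single j 1 : EN N) := by
    ext i
    simp [Pi.single_apply]
  calc L z = ∑ j, z.1 j * L (EuclideanSpace.single j 1) := by
        conv_lhs => rw [hz, map_sum]
        simp
    _ = _ := by simp [mul_comm]

theorem mem_polyHull_iff {E : Set (EN N)} (hE : IsCompact E) {z : EN N} :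
    z ∈ polyHull E ↔ ∀ (p : MvPolynomial (Fin N) ℂ) (M : ℝ), 0 ≤ M →
      (∀ w ∈ E, ‖MvPolynomial.eval (fun j => w j) p‖ ≤ M) →
      ‖MvPolynomial.eval (fun j => z j) p‖ ≤ M := by
  refine ⟨fun h p M hM hb =>
    (h p).trans (Real.iSup_le (fun w => Real.iSup_le (fun hw => hb w hw) hM) hM), fun h p => ?_⟩
  obtain ⟨M, hM⟩ := hE.exists_bound_of_continuousOn
    (continuous_eval_polynomial p).continuousOn
  have h_bdd : BddAbove (range fun w : EN N =>
      ⨆ _ : w ∈ E, ‖MvPolynomial.eval (fun j => w j) p‖) := by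
    refine ⟨max M 0, ?_⟩
    rintro _ ⟨w, rfl⟩
    exact Real.iSup_le (fun hw => (hM w hw).trans (le_max_left _ _)) (le_max_right _ _)
  refine h p _ (Real.iSup_nonneg fun w => Real.iSup_nonneg fun _ => norm_nonneg _) fun w hw => ?_
  simpa only [hw, ciSup_unique] using le_ciSup h_bdd w

theorem subset_polyHull {E : Set (EN N)} (hE : IsCompact E) : E ⊆ polyHull E :=
  fun z hz => (mem_polyHull_iff hE).2 fun _ _ _ h => h z hz

theorem mem_polyHull_iff_mem_functionHull {Q E : Set (EN N)} [CompactSpace Q] (hE : IsCompact E)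
    (hEQ : E ⊆ Q) {z : Q} :
    z.1 ∈ polyHull E ↔
      z ∈ functionHull (polynomialAlgebra Q).topologicalClosure (Subtype.val ⁻¹' E) := by
  rw [mem_polyHull_iff hE, functionHull_topologicalClosure]
  constructor
  · intro h g hg M hM hgE
    obtain ⟨p, hp⟩ := mem_polynomialAlgebra.1 hg
    rw [hp]
    exact h p M hM fun w hw => hp ⟨w, hEQ hw⟩ ▸ hgE ⟨w, hEQ hw⟩ hw
  · intro h p M hM hpE
    exact h ⟨_, (continuous_eval_polynomial p).comp continuous_subtype_val⟩
      (mem_polynomialAlgebra.2 ⟨p, fun _ => rfl⟩) M hM fun x hx => hpE x hx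

theorem polyHull_subset_of_convex {E : Set (EN N)} (hE : IsCompact E) (hconv : Convex ℝ E) :
    polyHull E ⊆ E := by
  intro z hz
  by_contra hzE
  obtain ⟨l, a, hlE, hlz⟩ := geometric_hahn_banach_closed_point hconv hE.isClosed hzE
  have : CompactSpace (insert z E : Set (EN N)) := isCompact_iff_compactSpace.1 (hE.insert z)
  obtain ⟨f, hf, hfl⟩ := exists_mem_polynomialAlgebra_re_eq (insert z E) l
  have h_hull := (mem_polyHull_iff_mem_functionHull hE (subset_insert z E)
    (z := ⟨z, mem_insert z E⟩)).1 hz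
  have h_le := re_le_of_mem_functionHull (Subalgebra.isClosed_topologicalClosure _)
    ⟨f, Subalgebra.le_topologicalClosure _ hf⟩ (a := a)
    (fun x hx => (hfl x).trans_le (hlE x hx).le) h_hull
  exact hlz.not_ge ((hfl _).symm.trans_le h_le)

theorem mem_polyHull_left_of_lt {X Y : Set (EN N)} (hX : IsCompact X) (hY : IsCompact Y)
    {l : EN N →L[ℝ] ℝ} {a : ℝ} (hlX : ∀ w ∈ X, a < l w) (hlY : ∀ w ∈ Y, l w < a) {z : EN N}
    (hz : z ∈ polyHull (X ∪ Y)) (hlz : a < l z) : z ∈ polyHull X := by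
  let Q : Set (EN N) := insert z (X ∪ Y)
  have hXYQ : X ∪ Y ⊆ Q := subset_insert z _
  have : CompactSpace Q := isCompact_iff_compactSpace.1 ((hX.union hY).insert z)
  obtain ⟨f, hf, hfl⟩ := exists_mem_polynomialAlgebra_re_eq Q l
  have h_ne : ∀ x, (f x).re ≠ a := by
    rintro ⟨x, rfl | hx | hx⟩
    exacts [hfl _ ▸ hlz.ne', hfl _ ▸ (hlX x hx).ne', hfl _ ▸ (hlY x hx).ne]
  have h_preimage : Subtype.val ⁻¹' (X ∪ Y) ∩ {x : Q | a < (f x).re} = Subtype.val ⁻¹' X := by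
    ext x
    simp only [hfl]
    exact ⟨fun ⟨hx, hax⟩ => hx.resolve_right fun hxY => (hlY _ hxY).not_gt hax,
      fun hx => ⟨Or.inl hx, hlX _ hx⟩⟩
  rw [mem_polyHull_iff_mem_functionHull (hX.union hY) hXYQ (z := ⟨z, mem_insert z _⟩)] at hz
  rw [mem_polyHull_iff_mem_functionHull hX (subset_union_left.trans hXYQ)
    (z := ⟨z, mem_insert z _⟩), ← h_preimage]
  exact mem_functionHull_inter_re_gt (Subalgebra.isClosed_topologicalClosure _)
    (f := ⟨f, Subalgebra.le_topologicalClosure _ hf⟩) h_ne hz ((hfl _).symm ▸ hlz)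

theorem polyHull_union_subset {X Y : Set (EN N)} (hX : IsCompact X) (hY : IsCompact Y)
    {l : EN N →L[ℝ] ℝ} {c : ℝ} (hlX : ∀ z ∈ X, c ≤ l z) (hlY : ∀ z ∈ Y, l z < c) :
    polyHull (X ∪ Y) ⊆ polyHull X ∪ polyHull Y := by
  intro z hz
  obtain ⟨b, hbc, hb⟩ : ∃ b < c, ∀ w ∈ Y, l w ≤ b := by
    rcases Y.eq_empty_or_nonempty with rfl | hne
    · exact ⟨c - 1, sub_one_lt c, by simp⟩
    · obtain ⟨w, hw, hmax⟩ := hY.exists_isMaxOn hne l.continuous.continuousOn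
      exact ⟨l w, hlY w hw, hmax⟩
  obtain ⟨a, ⟨hba, hac⟩, haz⟩ : ∃ a ∈ Ioo b c, a ≠ l z :=
    (Ioo_infinite hbc).exists_notMem_finite (finite_singleton (l z))
  have hlX' : ∀ w ∈ X, a < l w := fun w hw => hac.trans_le (hlX w hw)
  have hlY' : ∀ w ∈ Y, l w < a := fun w hw => (hb w hw).trans_lt hba
  rcases haz.lt_or_gt with h_lt | h_gt
  · exact Or.inl (mem_polyHull_left_of_lt hX hY hlX' hlY' hz h_lt)
  · exact Or.inr (mem_polyHull_left_of_lt (l := -l) (a := -a) hY hX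
      (fun w hw => neg_lt_neg (hlY' w hw)) (fun w hw => neg_lt_neg (hlX' w hw))
      (union_comm X Y ▸ hz) (neg_lt_neg h_gt))

end PolynomialHull

section ClosedCaps

variable {N : ℕ} {V Γ : Set (EN N)}

theorem IsClosedCap.subset_closure (hΓ : IsClosedCap V Γ) : Γ ⊆ closure V := by
  obtain ⟨l, c, -, -, rfl⟩ := hΓ
  exact closure_mono inter_subset_left

theorem IsClosedCap.isCompact (hΓ : IsClosedCap V Γ) (hV_bdd : Bornology.IsBounded V) :
    IsCompact Γ := by
  obtain ⟨l, c, -, -, rfl⟩ := hΓ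
  exact (hV_bdd.subset inter_subset_left).isCompact_closure

theorem IsClosedCap.convex (hΓ : IsClosedCap V Γ) (hV_conv : Convex ℝ V) : Convex ℝ Γ := by
  obtain ⟨l, c, -, -, rfl⟩ := hΓ
  exact (hV_conv.inter (convex_halfSpace_gt l.isLinear c)).closure

theorem mem_closure_inter_halfSpace {E : Type*} [NormedAddCommGroup E] [NormedSpace ℝ E]
    {V : Set E} (hV_open : IsOpen V) (hV_conv : Convex ℝ V) {l : E →L[ℝ] ℝ} {c : ℝ}
    (hne : (V ∩ {z | c < l z}).Nonempty) {z : E} (hz : z ∈ closure V) (hcz : c ≤ l z) :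
    z ∈ closure (V ∩ {z | c < l z}) := by
  obtain ⟨q, hqV, hcq : c < l q⟩ := hne
  have h_segment : openSegment ℝ q z ⊆ V ∩ {z | c < l z} := by
    intro w hw
    refine ⟨interior_subset (hV_conv.openSegment_interior_closure_subset_interior
      (hV_open.interior_eq.symm ▸ hqV) hz hw), ?_⟩
    obtain ⟨s, t, hs, ht, hst, rfl⟩ := hw
    calc c = s * c + t * c := by rw [← add_mul, hst, one_mul]
      _ < s * l q + t * l z := add_lt_add_of_lt_of_le (by gcongr) (by gcongr)
      _ = l (s • q + t • z) := by simp
  refine closure_mono h_segment ?_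
  rw [closure_openSegment]
  exact right_mem_segment ℝ q z

theorem IsClosedCap.exists_separating (hΓ : IsClosedCap V Γ) (hV_open : IsOpen V)
    (hV_conv : Convex ℝ V) : ∃ (l : EN N →L[ℝ] ℝ) (c : ℝ), (∀ z ∈ Γ, c ≤ l z) ∧
      ∀ z ∈ closure V \ Γ, l z < c := by
  obtain ⟨l, c, -, hne, rfl⟩ := hΓ
  refine ⟨l, c, fun z hz => ?_, fun z hz => ?_⟩
  · exact closure_lt_subset_le continuous_const l.continuous
      (closure_mono inter_subset_right hz)
  · by_contra! hcz
    exact hz.2 (mem_closure_inter_halfSpace hV_open hV_conv hne hz.1 hcz)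

theorem polynomiallyConvex_iUnion_closedCap_union {ι : Type*} [Finite ι] (hV_open : IsOpen V)
    (hV_conv : Convex ℝ V) (hV_bdd : Bornology.IsBounded V) {Γ : ι → Set (EN N)}
    (hΓ : ∀ i, IsClosedCap V (Γ i)) (hdisj : Pairwise fun i j => Disjoint (Γ i) (Γ j))
    {K : Set (EN N)} (hK : IsCompact K) (hKconv : PolynomiallyConvex K) (hKV : K ⊆ V)
    (hΓK : Disjoint (⋃ i, Γ i) K) : PolynomiallyConvex ((⋃ i, Γ i) ∪ K) := by
  have hΓ_compact : ∀ i, IsCompact (Γ i) := fun i => (hΓ i).isCompact hV_bdd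
  have h_finset : ∀ s : Finset ι, polyHull ((⋃ i ∈ s, Γ i) ∪ K) ⊆ (⋃ i ∈ s, Γ i) ∪ K := by
    intro s
    classical
    induction s using Finset.induction_on with
    | empty => simpa using hKconv.le
    | insert i s his ih =>
      obtain ⟨l, c, hlΓ, hl⟩ := (hΓ i).exists_separating hV_open hV_conv
      have h_rest : (⋃ j ∈ s, Γ j) ∪ K ⊆ closure V \ Γ i := by
        refine union_subset (iUnion₂_subset fun j hj => ?_) ?_
        · exact subset_sdiff.2 ⟨(hΓ j).subset_closure, hdisj (ne_of_mem_of_not_mem hj his)⟩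
        · exact subset_sdiff.2 ⟨hKV.trans _root_.subset_closure,
            (hΓK.mono_left (subset_iUnion Γ i)).symm⟩
      rw [Finset.set_biUnion_insert, union_assoc]
      exact (polyHull_union_subset (hΓ_compact i)
        ((s.isCompact_biUnion fun j _ => hΓ_compact j).union hK) hlΓ
        fun z hz => hl z (h_rest hz)).trans
        (union_subset_union (polyHull_subset_of_convex (hΓ_compact i) ((hΓ i).convex hV_conv)) ih)
  cases nonempty_fintype ι
  refine Subset.antisymm ?_ (subset_polyHull ((isCompact_iUnion hΓ_compact).union hK))
  simpa using h_finset Finset.univ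

end ClosedCaps

theorem exists_pos_forall_of_isCompact {X : Type*} [TopologicalSpace X] {K : Set X}
    (hK : IsCompact K) {P : ℝ → X → Prop}
    (hmono : ∀ ⦃η η' : ℝ⦄ ⦃y : X⦄, 0 < η' → η' ≤ η → P η y → P η' y)
    (hloc : ∀ x ∈ K, ∃ η > 0, ∀ᶠ y in 𝓝[K] x, P η y) : ∃ η > 0, ∀ y ∈ K, P η y := by
  refine hK.induction_on (p := fun S => ∃ η > 0, ∀ y ∈ S, P η y) ⟨1, one_pos, by simp⟩
    (fun S T hST ⟨η, hη, hT⟩ => ⟨η, hη, fun y hy => hT y (hST hy)⟩) ?_ fun x hx => ?_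
  · rintro S T ⟨η, hη, hS⟩ ⟨η', hη', hT⟩
    refine ⟨min η η', lt_min hη hη', fun y hy => ?_⟩
    exact hy.elim (fun h => hmono (lt_min hη hη') (min_le_left _ _) (hS y h))
      (fun h => hmono (lt_min hη hη') (min_le_right _ _) (hT y h))
  · obtain ⟨η, hη, h⟩ := hloc x hx
    exact ⟨{y | P η y}, h, η, hη, fun _ hy => hy⟩

theorem exists_pos_eventually_forall_mem_closedBall {X : Type*} [PseudoMetricSpace X] {x : X}
    {P : X × X → Prop} (hP : ∀ᶠ p in 𝓝 (x, x), P p) :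
    ∃ η > 0, ∀ᶠ y in 𝓝 x, ∀ z ∈ closedBall y η, P (z, y) := by
  obtain ⟨r, hr, h_ball⟩ := Metric.eventually_nhds_iff_ball.1 hP
  refine ⟨r / 2, half_pos hr, ?_⟩
  filter_upwards [ball_mem_nhds x (half_pos hr)] with y hy z hzy
  refine h_ball _ (mem_ball.2 (max_lt ?_ ?_))
  · linarith [dist_triangle z y x, mem_ball.1 hy, mem_closedBall.1 hzy]
  · linarith [mem_ball.1 hy]

theorem exists_pos_eventually_closedBall_subset {X : Type*} [PseudoMetricSpace X] {x : X}
    {s : Set X} (hs : s ∈ 𝓝 x) : ∃ η > 0, ∀ᶠ y in 𝓝 x, closedBall y η ⊆ s :=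
  exists_pos_eventually_forall_mem_closedBall (P := fun p => p.1 ∈ s)
    ((continuous_fst.tendsto (x, x)).eventually hs)

section SecondOrder

variable {E : Type*} [NormedAddCommGroup E] [NormedSpace ℝ E]

theorem exists_pos_forall_mul_sq_norm_le [FiniteDimensional ℝ E] {H : E →L[ℝ] E →L[ℝ] ℝ}
    {l : E →L[ℝ] ℝ} (hH : ∀ w ≠ 0, l w = 0 → 0 < H w w) :
    ∃ η > 0, ∀ w, η * ‖w‖ ^ 2 ≤ H w w + η⁻¹ * l w ^ 2 := by
  obtain ⟨η, hη, h_sphere⟩ : ∃ η > 0, ∀ w ∈ sphere (0 : E) 1, η ≤ H w w + η⁻¹ * l w ^ 2 := by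
    refine exists_pos_forall_of_isCompact (isCompact_sphere 0 1)
      (fun η η' w hη' hle h => ?_) fun x hx => ?_
    · calc η' ≤ η := hle
        _ ≤ H w w + η⁻¹ * l w ^ 2 := h
        _ ≤ H w w + η'⁻¹ * l w ^ 2 := by gcongr
    · have h_pointwise : ∀ᶠ η in 𝓝[>] (0 : ℝ), η < H x x + η⁻¹ * l x ^ 2 := by
        rcases eq_or_ne (l x) 0 with hlx | hlx
        · have hx0 : x ≠ 0 := ne_of_mem_sphere hx one_ne_zero
          simpa [hlx] using eventually_nhdsWithin_of_eventually_nhds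
            (eventually_lt_nhds (hH x hx0 hlx))
        · have h_top : Tendsto (fun η : ℝ => H x x + η⁻¹ * l x ^ 2) (𝓝[>] 0) atTop :=
            tendsto_atTop_add_const_left _ _
              (tendsto_inv_nhdsGT_zero.atTop_mul_const (by positivity))
          filter_upwards [h_top.eventually_gt_atTop 1, eventually_nhdsWithin_of_eventually_nhds
            (eventually_lt_nhds one_pos)] with η h1 h2 using h2.trans h1
      obtain ⟨η, h, hη⟩ := (h_pointwise.and self_mem_nhdsWithin).exists
      have h_cont : Continuous fun w => H w w + η⁻¹ * l w ^ 2 := by fun_prop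
      exact ⟨η, hη, eventually_nhdsWithin_of_eventually_nhds
        ((h_cont.tendsto x).eventually_const_le h)⟩
  refine ⟨η, hη, fun w => ?_⟩
  rcases eq_or_ne w 0 with rfl | hw
  · simp
  have h_unit := h_sphere (‖w‖⁻¹ • w) (by simp [norm_smul, hw])
  calc η * ‖w‖ ^ 2
      ≤ (H (‖w‖⁻¹ • w) (‖w‖⁻¹ • w) + η⁻¹ * l (‖w‖⁻¹ • w) ^ 2) * ‖w‖ ^ 2 := by gcongr
    _ = H w w + η⁻¹ * l w ^ 2 := by
        simp only [map_smul, smul_apply, smul_eq_mul]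
        field_simp

theorem isLittleO_sub_taylor_two {ρ : E → ℝ} {x : E} (hρ : ContDiffAt ℝ 2 ρ x) :
    (fun p : E × E => ρ p.1 - ρ p.2 - fderiv ℝ ρ p.2 (p.1 - p.2) -
      2⁻¹ * fderiv ℝ (fderiv ℝ ρ) x (p.1 - p.2) (p.1 - p.2)) =o[𝓝 (x, x)]
      fun p => ‖p.1 - p.2‖ ^ 2 := by
  set H := fderiv ℝ (fderiv ℝ ρ) x
  have hH_symm : ∀ v w, H v w = H w v := hρ.isSymmSndFDerivAt (by simp)
  have h_strict : HasStrictFDerivAt (fderiv ℝ ρ) H x :=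
    (hρ.fderiv_right (m := 1) (by norm_num)).hasStrictFDerivAt one_ne_zero
  refine Asymptotics.isLittleO_iff.2 fun δ hδ => ?_
  have h_diff : ∀ᶠ p : E × E in 𝓝 (x, x), DifferentiableAt ℝ ρ p.1 :=
    (continuous_fst.tendsto (x, x)).eventually
      ((hρ.eventually (by simp)).mono fun y hy => hy.differentiableAt two_ne_zero)
  have h_near := (h_strict.isLittleO.def hδ).and h_diff
  obtain ⟨r, hr, h_ball⟩ := Metric.eventually_nhds_iff_ball.1 h_near
  filter_upwards [ball_mem_nhds (x, x) hr] with ⟨z, y⟩ hzy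
  rw [← ball_prod_same] at hzy h_ball
  have h_segment : ∀ w ∈ segment ℝ y z, w ∈ ball x r := fun w hw =>
    (convex_ball x r).segment_subset hzy.2 hzy.1 hw
  -- Taylor's estimate is the mean value inequality for the Taylor remainder `φ` on `[y, z]`.
  let φ : E → ℝ := fun w => ρ w - ρ y - fderiv ℝ ρ y (w - y) - 2⁻¹ * H (w - y) (w - y)
  have h_deriv : ∀ w ∈ segment ℝ y z, HasFDerivWithinAt φ
      (fderiv ℝ ρ w - fderiv ℝ ρ y - H (w - y)) (segment ℝ y z) w := by
    intro w hw
    have h_sub : HasFDerivAt (fun w => w - y) (ContinuousLinearMap.id ℝ E) w :=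
      (hasFDerivAt_id w).sub_const y
    have h_quad : HasFDerivAt (fun w => H (w - y) (w - y)) ((2 : ℝ) • H (w - y)) w :=
      ((H.hasFDerivAt.comp w h_sub).clm_apply h_sub).congr_fderiv
        (by ext v; simp [hH_symm v, two_mul])
    have h_ρ := (h_ball (w, y) ⟨h_segment w hw, hzy.2⟩).2.hasFDerivAt
    exact ((((h_ρ.sub_const (ρ y)).sub ((fderiv ℝ ρ y).hasFDerivAt.comp w h_sub)).sub
      (h_quad.const_mul 2⁻¹)).congr_fderiv (by simp [smul_smul])).hasFDerivWithinAt
  have h_bound : ∀ w ∈ segment ℝ y z,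
      ‖fderiv ℝ ρ w - fderiv ℝ ρ y - H (w - y)‖ ≤ δ * ‖z - y‖ := by
    intro w hw
    refine (h_ball (w, y) ⟨h_segment w hw, hzy.2⟩).1.trans ?_
    gcongr
    exact norm_sub_le_of_mem_segment hw
  have h_mvt := (convex_segment y z).norm_image_sub_le_of_norm_hasFDerivWithin_le h_deriv h_bound
    (left_mem_segment ℝ y z) (right_mem_segment ℝ y z)
  simpa [φ, pow_two, mul_assoc] using h_mvt

end SecondOrder

section QuadraticContact

variable {E : Type*} [NormedAddCommGroup E] [NormedSpace ℝ E] {ρ : E → ℝ} {x : E}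

theorem half_le_of_le_add_inv_mul_sq {s κ c : ℝ} (hκ : 0 < κ) (hs : |s| ≤ κ / 2) (hc : 0 ≤ c)
    (h : c ≤ s + κ⁻¹ * s ^ 2) : c / 2 ≤ s := by
  have h_sq : κ⁻¹ * s ^ 2 ≤ |s| / 2 := calc
    κ⁻¹ * s ^ 2 = κ⁻¹ * |s| * |s| := by rw [mul_assoc, ← pow_two, sq_abs]
    _ ≤ κ⁻¹ * (κ / 2) * |s| := by gcongr
    _ = |s| / 2 := by field_simp
  rcases abs_cases s with ⟨hs', -⟩ | ⟨hs', -⟩ <;> linarith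

theorem exists_mul_sq_norm_le_fderiv_sub [FiniteDimensional ℝ E] (hρ : ContDiffAt ℝ 2 ρ x)
    (hH : ∀ w ≠ 0, fderiv ℝ ρ x w = 0 → 0 < fderiv ℝ (fderiv ℝ ρ) x w w) :
    ∃ c > 0, ∀ᶠ p : E × E in 𝓝 (x, x), ρ p.1 ≤ ρ p.2 →
      c * ‖p.1 - p.2‖ ^ 2 ≤ fderiv ℝ ρ p.2 (p.2 - p.1) := by
  obtain ⟨κ, hκ, h_form⟩ := exists_pos_forall_mul_sq_norm_le hH
  have h_cont : ContinuousAt (fderiv ℝ ρ) x := hρ.continuousAt_fderiv two_ne_zero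
  have h_cont₂ : ContinuousAt (fun p : E × E => fderiv ℝ ρ p.2) (x, x) :=
    h_cont.comp_of_eq continuousAt_snd rfl
  have h_pairing : ContinuousAt (fun p : E × E => fderiv ℝ ρ p.2 (p.2 - p.1)) (x, x) :=
    h_cont₂.clm_apply (by fun_prop)
  have h_small : ∀ᶠ p : E × E in 𝓝 (x, x), |fderiv ℝ ρ p.2 (p.2 - p.1)| < κ / 2 :=
    h_pairing.abs.eventually_lt_const (by simpa using hκ)
  have h_near : ∀ᶠ p : E × E in 𝓝 (x, x), ‖fderiv ℝ ρ x - fderiv ℝ ρ p.2‖ < κ / 4 :=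
    (continuousAt_const.sub h_cont₂).norm.eventually_lt_const (by simpa using hκ)
  refine ⟨κ / 8, by positivity, ?_⟩
  filter_upwards [h_small, h_near, (isLittleO_sub_taylor_two hρ).def (show 0 < κ / 8 by positivity)]
    with ⟨z, y⟩ h_small h_near h_taylor hzy
  set s := fderiv ℝ ρ y (y - z)
  set h := z - y
  have h_neg : fderiv ℝ ρ y h = -s := by rw [← map_neg, neg_sub]
  have h_diff : |fderiv ℝ ρ x h + s| ≤ κ / 4 * ‖h‖ := calc
    |fderiv ℝ ρ x h + s| = ‖(fderiv ℝ ρ x - fderiv ℝ ρ y) h‖ := by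
      rw [sub_apply, h_neg, sub_neg_eq_add, Real.norm_eq_abs]
    _ ≤ κ / 4 * ‖h‖ := ContinuousLinearMap.le_of_opNorm_le _ h_near.le h
  have h_sq : κ⁻¹ * fderiv ℝ ρ x h ^ 2 ≤ κ / 8 * ‖h‖ ^ 2 + 2 * (κ⁻¹ * s ^ 2) := calc
    κ⁻¹ * fderiv ℝ ρ x h ^ 2 ≤ κ⁻¹ * (2 * (fderiv ℝ ρ x h + s) ^ 2 + 2 * s ^ 2) := by
      gcongr
      nlinarith [sq_nonneg (fderiv ℝ ρ x h + 2 * s)]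
    _ ≤ κ⁻¹ * (2 * (κ / 4 * ‖h‖) ^ 2 + 2 * s ^ 2) := by
      gcongr κ⁻¹ * (2 * ?_ + _)
      exact sq_le_sq' (abs_le.1 h_diff).1 (abs_le.1 h_diff).2
    _ = κ / 8 * ‖h‖ ^ 2 + 2 * (κ⁻¹ * s ^ 2) := by field_simp; ring
  have h_lower : κ / 4 * ‖h‖ ^ 2 ≤ s + κ⁻¹ * s ^ 2 := by
    rw [h_neg, Real.norm_of_nonneg (sq_nonneg ‖h‖), Real.norm_eq_abs] at h_taylor
    dsimp only at h_taylor hzy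
    linarith [(abs_le.1 h_taylor).1, h_form h, mul_nonneg hκ.le (sq_nonneg ‖h‖)]
  calc κ / 8 * ‖h‖ ^ 2 = κ / 4 * ‖h‖ ^ 2 / 2 := by ring
    _ ≤ s := half_le_of_le_add_inv_mul_sq hκ h_small.le (by positivity) h_lower

theorem exists_fderiv_sub_le_mul_sq_norm (hρ : ContDiffAt ℝ 2 ρ x) :
    ∃ C > 0, ∀ᶠ p : E × E in 𝓝 (x, x), ρ p.2 ≤ ρ p.1 →
      fderiv ℝ ρ p.2 (p.2 - p.1) ≤ C * ‖p.1 - p.2‖ ^ 2 := by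
  set H := fderiv ℝ (fderiv ℝ ρ) x
  refine ⟨1 + ‖H‖, by positivity, ?_⟩
  filter_upwards [(isLittleO_sub_taylor_two hρ).def (show (0 : ℝ) < 1 by norm_num)]
    with ⟨z, y⟩ h_taylor hzy
  set h := z - y
  have h_neg : fderiv ℝ ρ y (y - z) = -fderiv ℝ ρ y h := by rw [← map_neg, neg_sub]
  have h_form : H h h ≤ ‖H‖ * ‖h‖ ^ 2 := calc
    H h h ≤ ‖H h h‖ := Real.le_norm_self _
    _ ≤ ‖H‖ * ‖h‖ * ‖h‖ := H.le_opNorm₂ h h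
    _ = ‖H‖ * ‖h‖ ^ 2 := by ring
  rw [Real.norm_of_nonneg (sq_nonneg ‖h‖), Real.norm_eq_abs] at h_taylor
  linarith [(abs_le.1 h_taylor).2, mul_nonneg (norm_nonneg H) (sq_nonneg ‖h‖)]

/-- The hyperplane through `y` with conormal `l` touches the boundary of `V` at `y` to second
order: up to the factors `η` and `η⁻¹`, the height `l (y - z)` below it is at least `‖z - y‖ ^ 2`
for `z ∈ closure V` and at most `‖z - y‖ ^ 2` for `z ∈ frontier V`, as long as `‖z - y‖ ≤ η`.
A single constant `η` is used throughout, so that it can be shrunk freely. -/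
def QuadraticContact (V : Set E) (l : E →L[ℝ] ℝ) (η : ℝ) (y : E) : Prop :=
  (∀ z ∈ closure V, ‖z - y‖ ≤ η → η * ‖z - y‖ ^ 2 ≤ l (y - z)) ∧
    ∀ z ∈ frontier V, ‖z - y‖ ≤ η → l (y - z) ≤ η⁻¹ * ‖z - y‖ ^ 2

theorem QuadraticContact.mono {V : Set E} {l : E →L[ℝ] ℝ} {η η' : ℝ} {y : E} (hη' : 0 < η')
    (hle : η' ≤ η) (h : QuadraticContact V l η y) : QuadraticContact V l η' y := by
  refine ⟨fun z hz hzy => ?_, fun z hz hzy => ?_⟩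
  · exact le_trans (by gcongr) (h.1 z hz (hzy.trans hle))
  · exact (h.2 z hz (hzy.trans hle)).trans (by gcongr)

theorem exists_eventually_quadraticContact [FiniteDimensional ℝ E] {V : Set E}
    (hρ : ContDiffAt ℝ 2 ρ x)
    (hH : ∀ w ≠ 0, fderiv ℝ ρ x w = 0 → 0 < fderiv ℝ (fderiv ℝ ρ) x w w)
    (h_closure : ∀ᶠ z in 𝓝 x, z ∈ closure V → ρ z ≤ 0)
    (h_frontier : ∀ᶠ z in 𝓝 x, z ∈ frontier V → ρ z = 0) :
    ∃ η > 0, ∀ᶠ y in 𝓝[frontier V] x, QuadraticContact V (fderiv ℝ ρ y) η y := by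
  obtain ⟨c, hc, h_lower⟩ := exists_mul_sq_norm_le_fderiv_sub hρ hH
  obtain ⟨C, hC, h_upper⟩ := exists_fderiv_sub_le_mul_sq_norm hρ
  obtain ⟨r, hr, h_near⟩ := exists_pos_eventually_forall_mem_closedBall
    (h_lower.and (h_upper.and ((continuous_fst.tendsto (x, x)).eventually
      (h_closure.and h_frontier))))
  have hη : 0 < min r (min c C⁻¹) := by positivity
  refine ⟨min r (min c C⁻¹), hη, eventually_nhdsWithin_iff.2 ?_⟩
  filter_upwards [h_near, h_frontier] with y h_near h_ρ hy
  refine ⟨fun z hz hzy => ?_, fun z hz hzy => ?_⟩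
  · obtain ⟨h_lower, -, h_le, -⟩ :=
      h_near z (mem_closedBall_iff_norm.2 (hzy.trans (min_le_left _ _)))
    refine le_trans ?_ (h_lower ((h_le hz).trans (h_ρ hy).ge))
    gcongr
    exact (min_le_right _ _).trans (min_le_left _ _)
  · obtain ⟨-, h_upper, -, h_eq⟩ :=
      h_near z (mem_closedBall_iff_norm.2 (hzy.trans (min_le_left _ _)))
    refine (h_upper ((h_ρ hy).trans (h_eq hz).symm).le).trans ?_
    gcongr
    exact le_inv_of_le_inv₀ hη ((min_le_right _ _).trans (min_le_right _ _))

end QuadraticContact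

section Caps

variable {E : Type*} [NormedAddCommGroup E] [NormedSpace ℝ E] {V : Set E} {l : E →L[ℝ] ℝ}
  {η r : ℝ} {y : E}

/-- The closed cap cut off from `V` by the hyperplane parallel to `ker l` at height `h` below
`y`. -/
def closedCapAt (V : Set E) (l : E →L[ℝ] ℝ) (y : E) (h : ℝ) : Set E :=
  closure (V ∩ {z | l y - h < l z})

theorem QuadraticContact.closedCapAt_subset_closedBall (hq : QuadraticContact V l η y)
    (hV : Convex ℝ V) (hy : y ∈ closure V) (hr : 0 < r) (hrη : r ≤ η) :
    closedCapAt V l y (η * r ^ 2) ⊆ closedBall y r := by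
  refine closure_minimal ?_ isClosed_closedBall
  rintro z ⟨hzV, hz : l y - η * r ^ 2 < l z⟩
  rw [mem_closedBall, dist_eq_norm]
  by_contra! h_far
  -- Moving `z` towards `y` up to distance `r` only decreases its height below `y`.
  set t := r / ‖z - y‖
  have h_dist : 0 < ‖z - y‖ := hr.trans h_far
  have ht : 0 < t := by positivity
  have ht1 : t ≤ 1 := (div_le_one₀ h_dist).2 h_far.le
  have h_mem : y + t • (z - y) ∈ closure V :=
    hV.closure.add_smul_sub_mem hy (subset_closure hzV) ⟨ht.le, ht1⟩
  have h_norm : ‖y + t • (z - y) - y‖ = r := by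
    rw [add_sub_cancel_left, norm_smul, Real.norm_of_nonneg ht.le, div_mul_cancel₀ _ h_dist.ne']
  have h_height := hq.1 _ h_mem (h_norm.trans_le hrη)
  rw [h_norm, sub_add_cancel_left, map_neg, map_smul, smul_eq_mul, ← mul_neg, ← map_neg, neg_sub,
    map_sub] at h_height
  have h_pos : 0 < η * r ^ 2 := mul_pos (hr.trans_le hrη) (pow_pos hr 2)
  nlinarith

theorem QuadraticContact.frontier_inter_closedBall_subset (hq : QuadraticContact V l η y)
    (hη : η ≤ 1) (hr : 0 < r) (hrη : r ≤ η) :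
    frontier V ∩ closedBall y (η / 2 * r) ⊆ closedCapAt V l y (η * r ^ 2) := by
  rintro z ⟨hz, hzy⟩
  rw [mem_closedBall, dist_eq_norm] at hzy
  have hη0 : 0 < η := hr.trans_le hrη
  have h_height : l (y - z) < η * r ^ 2 := calc
    l (y - z) ≤ η⁻¹ * ‖z - y‖ ^ 2 := hq.2 z hz (by nlinarith)
    _ ≤ η⁻¹ * (η / 2 * r) ^ 2 := by gcongr
    _ = η * r ^ 2 / 4 := by field_simp; ring
    _ < η * r ^ 2 := div_lt_self (by positivity) (by norm_num)
  have h_open : IsOpen {z | l y - η * r ^ 2 < l z} := isOpen_lt continuous_const l.continuous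
  rw [map_sub] at h_height
  rw [closedCapAt, inter_comm]
  exact h_open.inter_closure ⟨by rw [mem_ofPred_eq]; linarith, frontier_subset_closure hz⟩

theorem interior_closedCapAt_nonempty (hV : IsOpen V) (hy : y ∈ closure V) {h : ℝ} (hh : 0 < h) :
    (interior (closedCapAt V l y h)).Nonempty := by
  have h_open : IsOpen {z | l y - h < l z} := isOpen_lt continuous_const l.continuous
  obtain ⟨z, hz⟩ := mem_closure_iff.1 hy _ h_open (sub_lt_self _ hh)
  exact ⟨z, interior_maximal subset_closure (hV.inter h_open) hz.symm⟩

theorem isClosedCap_closedCapAt {N : ℕ} {V : Set (EN N)} {l : EN N →L[ℝ] ℝ} {y : EN N} {h : ℝ}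
    (hl : l ≠ 0) (hy : y ∈ closure V) (hh : 0 < h) : IsClosedCap V (closedCapAt V l y h) := by
  have h_open : IsOpen {z | l y - h < l z} := isOpen_lt continuous_const l.continuous
  obtain ⟨z, hz⟩ := mem_closure_iff.1 hy _ h_open (sub_lt_self _ hh)
  exact ⟨l, l y - h, hl, ⟨z, hz.symm⟩, rfl⟩

end Caps

section AhlforsRegular

theorem exists_hausdorffMeasure_closedBall_eq (F : Type*) [NormedAddCommGroup F] [NormedSpace ℝ F]
    [FiniteDimensional ℝ F] [MeasurableSpace F] [BorelSpace F] :
    ∃ b > 0, ∀ (w : F) {r : ℝ}, 0 ≤ r →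
      μH[Module.finrank ℝ F] (closedBall w r) = ENNReal.ofReal (b * r ^ Module.finrank ℝ F) := by
  have h_finite : (μH[Module.finrank ℝ F] (closedBall (0 : F) 1)) ≠ ⊤ :=
    measure_closedBall_lt_top.ne
  have h_pos : (μH[Module.finrank ℝ F] (closedBall (0 : F) 1)) ≠ 0 :=
    (measure_closedBall_pos _ _ one_pos).ne'
  refine ⟨_, ENNReal.toReal_pos h_pos h_finite, fun w r hr => ?_⟩
  rw [Measure.addHaar_closedBall' _ w hr, mul_comm, ENNReal.ofReal_mul ENNReal.toReal_nonneg,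
    ENNReal.ofReal_toReal h_finite]

theorem hausdorffMeasure_le_mul_of_subset_image {X Y : Type*} [EMetricSpace X] [MeasurableSpace X]
    [BorelSpace X] [EMetricSpace Y] [MeasurableSpace Y] [BorelSpace Y] {g : Y → X} {M : ℝ≥0}
    {A : Set X} {B : Set Y} (hg : LipschitzOnWith M g B) (hA : A ⊆ g '' B) (d : ℕ) :
    μH[d] A ≤ ENNReal.ofReal (M ^ d) * μH[d] B := by
  refine (measure_mono hA).trans ((hg.hausdorffMeasure_image_le d.cast_nonneg).trans_eq ?_)
  rw [ENNReal.rpow_natCast, ENNReal.ofReal_pow M.coe_nonneg, ENNReal.ofReal_coe_nnreal]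

/-- Ahlfors regularity of `S` in dimension `d` at the point `y`, at all scales `r ≤ η`. The same
`η` serves as the scale and as the constant, so that it can be shrunk freely. -/
def AhlforsRegularAt {X : Type*} [MetricSpace X] [MeasurableSpace X] [BorelSpace X] (d : ℕ)
    (S : Set X) (η : ℝ) (y : X) : Prop :=
  ∀ r ∈ Ioc 0 η, ENNReal.ofReal (η * r ^ d) ≤ μH[d] (S ∩ closedBall y r) ∧
    μH[d] (S ∩ closedBall y r) ≤ ENNReal.ofReal (η⁻¹ * r ^ d)

variable {X : Type*} [MetricSpace X] [MeasurableSpace X] [BorelSpace X] {S : Set X} {x y : X}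
  {d : ℕ} {η : ℝ}

theorem AhlforsRegularAt.mono {η' : ℝ} (hη' : 0 < η') (hle : η' ≤ η)
    (h : AhlforsRegularAt d S η y) : AhlforsRegularAt d S η' y := by
  rintro r ⟨hr, hrη⟩
  obtain ⟨h_lower, h_upper⟩ := h r ⟨hr, hrη.trans hle⟩
  exact ⟨(ENNReal.ofReal_le_ofReal (by gcongr)).trans h_lower,
    h_upper.trans (ENNReal.ofReal_le_ofReal (by gcongr))⟩

theorem AhlforsRegularAt.measure_inter_closedBall_le_mul (h : AhlforsRegularAt d S η y) {a b r : ℝ}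
    (ha : 0 < a) (hb : 0 < b) (hr : 0 < r) (har : a * r ≤ η) (hbr : b * r ≤ η) :
    μH[d] (S ∩ closedBall y (a * r)) ≤
      (η⁻¹ * a ^ d / (η * b ^ d)).toNNReal * μH[d] (S ∩ closedBall y (b * r)) := by
  have hη : 0 < η := (mul_pos ha hr).trans_le har
  calc μH[d] (S ∩ closedBall y (a * r)) ≤ ENNReal.ofReal (η⁻¹ * (a * r) ^ d) :=
        (h _ ⟨by positivity, har⟩).2
    _ = ENNReal.ofReal (η⁻¹ * a ^ d / (η * b ^ d)) * ENNReal.ofReal (η * (b * r) ^ d) := by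
        rw [← ENNReal.ofReal_mul (by positivity), mul_pow, mul_pow]
        congr 1
        field_simp
    _ ≤ ENNReal.ofReal (η⁻¹ * a ^ d / (η * b ^ d)) * μH[d] (S ∩ closedBall y (b * r)) := by
        gcongr
        exact (h _ ⟨by positivity, hbr⟩).1

section LipschitzChart

variable {Y : Type*} [MetricSpace Y] [MeasurableSpace Y] [BorelSpace Y] {φ : X → Y} {ψ : Y → X}
  {M : ℝ≥0} {b r : ℝ}

theorem hausdorffMeasure_inter_closedBall_le
    (h_ball : ∀ (w : Y) {r : ℝ}, 0 ≤ r → μH[d] (closedBall w r) = ENNReal.ofReal (b * r ^ d))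
    (hr : 0 ≤ r) (hφ : LipschitzOnWith M φ (closedBall y r))
    (hψ : LipschitzOnWith M ψ (closedBall (φ y) (M * r)))
    (h_left : ∀ z ∈ S ∩ closedBall y r, ψ (φ z) = z) :
    μH[d] (S ∩ closedBall y r) ≤ ENNReal.ofReal (b * (M ^ d * M ^ d) * r ^ d) := by
  have h_image : S ∩ closedBall y r ⊆ ψ '' closedBall (φ y) (M * r) := by
    refine fun z hz => ⟨φ z, ?_, h_left z hz⟩
    calc dist (φ z) (φ y) ≤ M * dist z y := hφ.dist_le_mul _ hz.2 _ (mem_closedBall_self hr)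
      _ ≤ M * r := by gcongr; exact hz.2
  refine (hausdorffMeasure_le_mul_of_subset_image hψ h_image d).trans_eq ?_
  rw [h_ball _ (by positivity), ← ENNReal.ofReal_mul (by positivity)]
  ring_nf

theorem le_hausdorffMeasure_inter_closedBall
    (h_ball : ∀ (w : Y) {r : ℝ}, 0 ≤ r → μH[d] (closedBall w r) = ENNReal.ofReal (b * r ^ d))
    (hM : 0 < M) (hr : 0 ≤ r) (hφ : LipschitzOnWith M φ (closedBall y r))
    (hψ : LipschitzOnWith M ψ (closedBall (φ y) (r / M))) (hy : ψ (φ y) = y)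
    (h_right : ∀ w ∈ closedBall (φ y) (r / M), ψ w ∈ S ∧ φ (ψ w) = w) :
    ENNReal.ofReal (b / (M ^ d * M ^ d) * r ^ d) ≤ μH[d] (S ∩ closedBall y r) := by
  have h_image : closedBall (φ y) (r / M) ⊆ φ '' (S ∩ closedBall y r) := by
    refine fun w hw => ⟨ψ w, ⟨(h_right w hw).1, ?_⟩, (h_right w hw).2⟩
    calc dist (ψ w) y = dist (ψ w) (ψ (φ y)) := by rw [hy]
      _ ≤ M * dist w (φ y) := hψ.dist_le_mul _ hw _ (mem_closedBall_self (by positivity))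
      _ ≤ r := (le_div_iff₀' (NNReal.coe_pos.2 hM)).1 hw
  have h_le := hausdorffMeasure_le_mul_of_subset_image (hφ.mono inter_subset_right) h_image d
  have hMd : 0 < ENNReal.ofReal (M ^ d) := ENNReal.ofReal_pos.2 (by positivity)
  refine (ENNReal.mul_le_mul_iff_right hMd.ne' ENNReal.ofReal_ne_top).1 (le_of_eq_of_le ?_ h_le)
  rw [h_ball _ (by positivity), ← ENNReal.ofReal_mul (by positivity), div_pow]
  congr 1
  field_simp

end LipschitzChart

variable {F : Type*} [NormedAddCommGroup F] [NormedSpace ℝ F] [FiniteDimensional ℝ F]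
  [MeasurableSpace F] [BorelSpace F]

theorem exists_eventually_ahlforsRegularAt_of_lipschitzOnWith {φ : X → F} {ψ : F → X} {M : ℝ≥0}
    {s : Set X} {t : Set F} (hM : 1 ≤ M) (hs : s ∈ 𝓝 x) (ht : t ∈ 𝓝 (φ x))
    (hφ : LipschitzOnWith M φ s) (hψ : LipschitzOnWith M ψ t)
    (h_left : ∀ z ∈ S ∩ s, ψ (φ z) = z) (h_right : ∀ w ∈ t, ψ w ∈ S ∧ φ (ψ w) = w) :
    ∃ η > 0, ∀ᶠ y in 𝓝[S] x, AhlforsRegularAt (Module.finrank ℝ F) S η y := by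
  set d := Module.finrank ℝ F
  have hM0 : 0 < M := one_pos.trans_le hM
  obtain ⟨b, hb, h_ball⟩ := exists_hausdorffMeasure_closedBall_eq F
  obtain ⟨η₁, hη₁, h_s⟩ := exists_pos_eventually_closedBall_subset hs
  obtain ⟨η₂, hη₂, h_t⟩ := exists_pos_eventually_closedBall_subset ht
  set c : ℝ := M ^ d * M ^ d
  set η := min (min η₁ (η₂ / M)) (min (b / c) (b * c)⁻¹)
  have hη : 0 < η := by positivity
  have hη_lower : η ≤ b / c := (min_le_right _ _).trans (min_le_left _ _)
  have hη_upper : b * c ≤ η⁻¹ := le_inv_of_le_inv₀ hη ((min_le_right _ _).trans (min_le_right _ _))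
  refine ⟨η, hη, ?_⟩
  filter_upwards [nhdsWithin_le_nhds h_s, self_mem_nhdsWithin,
    nhdsWithin_le_nhds ((hφ.continuousOn.continuousAt hs).eventually h_t)]
    with y h_s hyS h_t r ⟨hr, hrη⟩
  replace h_s := (closedBall_subset_closedBall
    (hrη.trans ((min_le_left _ _).trans (min_le_left _ _)))).trans h_s
  replace h_t := (closedBall_subset_closedBall ((le_div_iff₀' (NNReal.coe_pos.2 hM0)).1
    (hrη.trans ((min_le_left _ _).trans (min_le_right _ _))))).trans h_t
  have h_t' : closedBall (φ y) (r / M) ⊆ t := (closedBall_subset_closedBall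
    ((div_le_self hr.le hM).trans (le_mul_of_one_le_left hr.le hM))).trans h_t
  have h_lower := le_hausdorffMeasure_inter_closedBall h_ball hM0 hr.le (hφ.mono h_s)
    (hψ.mono h_t') (h_left y ⟨hyS, h_s (mem_closedBall_self hr.le)⟩)
    (fun w hw => h_right w (h_t' hw))
  have h_upper := hausdorffMeasure_inter_closedBall_le h_ball hr.le (hφ.mono h_s) (hψ.mono h_t)
    (fun z hz => h_left z ⟨hz.1, h_s hz.2⟩)
  exact ⟨(ENNReal.ofReal_le_ofReal (by gcongr)).trans h_lower,
    h_upper.trans (ENNReal.ofReal_le_ofReal (by gcongr))⟩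

end AhlforsRegular

section LevelSet

variable {E F G : Type*} [NormedAddCommGroup E] [NormedSpace ℝ E] [MeasurableSpace E]
  [BorelSpace E]

theorem exists_eventually_ahlforsRegularAt_of_implicitFunctionData [CompleteSpace E]
    [NormedAddCommGroup F] [NormedSpace ℝ F] [CompleteSpace F]
    [NormedAddCommGroup G] [NormedSpace ℝ G] [FiniteDimensional ℝ G] [CompleteSpace G]
    (Φ : ImplicitFunctionData ℝ E F G) {S : Set E}
    (hS : ∀ᶠ z in 𝓝 Φ.pt, z ∈ S ↔ Φ.leftFun z = Φ.leftFun Φ.pt) :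
    ∃ η > 0, ∀ᶠ y in 𝓝[S] Φ.pt, AhlforsRegularAt (Module.finrank ℝ G) S η y := by
  borelize G
  set c := Φ.leftFun Φ.pt
  set φ := Φ.rightFun
  set ψ := Φ.implicitFunction c
  obtain ⟨K₁, s, hs, hφ⟩ := Φ.hasStrictFDerivAt_rightFun.exists_lipschitzOnWith
  obtain ⟨K₂, t, ht, hψ⟩ := Φ.hasStrictFDerivAt_implicitFunction_fderiv.exists_lipschitzOnWith
  have hψ_pt : ψ (φ Φ.pt) = Φ.pt := Φ.leftFun_eq_iff_implicitFunction.self_of_nhds.1 rfl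
  have hψ_tendsto : Tendsto ψ (𝓝 (φ Φ.pt)) (𝓝 Φ.pt) := by
    have h_cont : ContinuousAt ψ (φ Φ.pt) := Φ.differentiableAt_implicitFunction.continuousAt
    rwa [ContinuousAt, hψ_pt] at h_cont
  have h_fst : ∀ᶠ w in 𝓝 (φ Φ.pt), Φ.leftFun (ψ w) = c :=
    Φ.leftFun_implicitFunction.curry_nhds.self_of_nhds
  have h_snd : ∀ᶠ w in 𝓝 (φ Φ.pt), φ (ψ w) = w :=
    (Φ.rightFun_implicitFunction.curry_nhds).self_of_nhds
  have h_left : {z | z ∈ S → ψ (φ z) = z} ∈ 𝓝 Φ.pt := by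
    filter_upwards [hS, Φ.leftFun_eq_iff_implicitFunction] with z hzS hz h
    exact hz.1 (hzS.1 h)
  have h_right : {w | ψ w ∈ S ∧ φ (ψ w) = w} ∈ 𝓝 (φ Φ.pt) := by
    filter_upwards [hψ_tendsto.eventually hS, h_fst, h_snd] with w hwS h_fst h_snd
    exact ⟨hwS.2 h_fst, h_snd⟩
  exact exists_eventually_ahlforsRegularAt_of_lipschitzOnWith (M := max 1 (max K₁ K₂))
    (le_max_left _ _) (inter_mem hs h_left) (inter_mem ht h_right)
    ((hφ.mono inter_subset_left).weaken ((le_max_left _ _).trans (le_max_right _ _)))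
    ((hψ.mono inter_subset_left).weaken ((le_max_right _ _).trans (le_max_right _ _)))
    (fun z hz => hz.2.2 hz.1) (fun w hw => hw.2)

theorem exists_eventually_ahlforsRegularAt_of_hasStrictFDerivAt [FiniteDimensional ℝ E] {S : Set E}
    {ρ : E → ℝ} {f : E →L[ℝ] ℝ} {x : E} (hρ : HasStrictFDerivAt ρ f x) (hf : f ≠ 0) {d : ℕ}
    (hd : Module.finrank ℝ E = d + 1) (hS : ∀ᶠ z in 𝓝 x, z ∈ S ↔ ρ z = ρ x) :
    ∃ η > 0, ∀ᶠ y in 𝓝[S] x, AhlforsRegularAt d S η y := by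
  have := FiniteDimensional.complete ℝ E
  have h_range : f.range = ⊤ :=
    LinearMap.range_eq_top.2 (LinearMap.surjective (ContinuousLinearMap.coe_injective.ne hf))
  have h_finrank : Module.finrank ℝ f.ker = d := by
    have := f.toLinearMap.finrank_range_add_finrank_ker
    rw [h_range, finrank_top, Module.finrank_self, hd, add_comm] at this
    exact Nat.succ_injective this
  have h_ker : f.ker.ClosedComplemented := f.ker_closedComplemented_of_finiteDimensional_range
  rw [← h_finrank]
  exact exists_eventually_ahlforsRegularAt_of_implicitFunctionData
    (hρ.implicitFunctionDataOfComplemented ρ f h_range h_ker) hS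

end LevelSet

theorem exists_finset_measure_sdiff_biUnion_lt {X ι : Type*} [MeasurableSpace X] {μ : Measure X}
    [IsFiniteMeasure μ] {S : Set X} (hS : MeasurableSet S)
    {u : Set ι} (hu : u.Countable) {B : ι → Set X} (hB : ∀ i ∈ u, MeasurableSet (B i))
    (h_null : μ (S \ ⋃ i ∈ u, B i) = 0) {ε : ℝ≥0∞} (hε : 0 < ε) :
    ∃ F : Finset ι, ↑F ⊆ u ∧ μ (S \ ⋃ i ∈ F, B i) < ε := by
  have := hu.to_subtype
  let D : Finset u → Set X := fun F => S \ ⋃ i ∈ F, B i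
  have h_anti : Antitone D := fun F G hFG =>
    sdiff_subset_sdiff_right (biUnion_subset_biUnion_left hFG)
  have h_meas : ∀ F, NullMeasurableSet (D F) μ := fun F =>
    (hS.diff (F.measurableSet_biUnion fun i _ => hB i i.2)).nullMeasurableSet
  have h_inter : ⋂ F, D F ⊆ S \ ⋃ i ∈ u, B i := by
    intro x hx
    simp only [D, mem_iInter, Set.mem_sdiff, mem_iUnion, not_exists] at hx ⊢
    exact ⟨(hx ∅).1, fun i hi => (hx {⟨i, hi⟩}).2 ⟨i, hi⟩ (Finset.mem_singleton_self _)⟩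
  have h_lim := tendsto_measure_iInter_atTop h_meas h_anti ⟨∅, measure_ne_top _ _⟩
  rw [measure_mono_null h_inter h_null] at h_lim
  obtain ⟨F, hF⟩ := (h_lim.eventually_lt_const hε).exists
  exact ⟨F.map (Function.Embedding.subtype _), by simp, by simpa [D] using hF⟩

theorem exists_fin_disjoint_measure_sdiff_iUnion_lt {X : Type*} [MetricSpace X]
    [SecondCountableTopology X] [MeasurableSpace X] [OpensMeasurableSpace X] {μ : Measure X}
    [IsFiniteMeasure μ] {S U : Set X} (hS : MeasurableSet S) (hU : IsOpen U)
    {B : X → ℝ → Set X} {R : ℝ} (hR : 0 < R) {C : ℝ≥0}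
    (hB_closed : ∀ x ∈ S, ∀ r ∈ Ioc 0 R, IsClosed (B x r))
    (hB_interior : ∀ x ∈ S, ∀ r ∈ Ioc 0 R, (interior (B x r)).Nonempty)
    (hB_ball : ∀ x ∈ S, ∀ r ∈ Ioc 0 R, B x r ⊆ closedBall x r)
    (hB_measure : ∀ x ∈ S, ∀ r ∈ Ioc 0 R, μ (closedBall x (3 * r)) ≤ C * μ (B x r))
    {ε : ℝ≥0∞} (hε : 0 < ε) :
    ∃ (n : ℕ) (x : Fin n → X) (r : Fin n → ℝ),
      (∀ i, x i ∈ S ∧ r i ∈ Ioc 0 R ∧ B (x i) (r i) ⊆ U) ∧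
      (Pairwise fun i j => Disjoint (B (x i) (r i)) (B (x j) (r j))) ∧
      μ ((U ∩ S) \ ⋃ i, B (x i) (r i)) < ε := by
  let t : Set (X × ℝ) := {p | p.1 ∈ S ∧ p.2 ∈ Ioc 0 R ∧ B p.1 p.2 ⊆ U}
  have h_fine : ∀ x ∈ U ∩ S, ∀ δ > 0, ∃ p ∈ t, p.2 ≤ δ ∧ p.1 = x := by
    rintro x ⟨hxU, hxS⟩ δ hδ
    obtain ⟨s, hs, hsU⟩ := nhds_basis_closedBall.mem_iff.1 (hU.mem_nhds hxU)
    have hr : min δ (min s R) ∈ Ioc 0 R :=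
      ⟨by positivity, (min_le_right _ _).trans (min_le_right _ _)⟩
    refine ⟨(x, min δ (min s R)), ⟨hxS, hr, (hB_ball x hxS _ hr).trans ?_⟩, min_le_left _ _, rfl⟩
    exact (closedBall_subset_closedBall ((min_le_right _ _).trans (min_le_left _ _))).trans hsU
  obtain ⟨u, hut, hu, hu_disj, hu_null⟩ := Vitali.exists_disjoint_covering_ae μ (U ∩ S) t C
    (fun p => p.2) (fun p => p.1) (fun p => B p.1 p.2)
    (fun p hp => hB_ball _ hp.1 _ hp.2.1) (fun p hp => hB_measure _ hp.1 _ hp.2.1)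
    (fun p hp => hB_interior _ hp.1 _ hp.2.1) (fun p hp => hB_closed _ hp.1 _ hp.2.1) h_fine
  obtain ⟨F, hFu, hF⟩ := exists_finset_measure_sdiff_biUnion_lt (hU.measurableSet.inter hS) hu
    (fun p hp => (hB_closed _ (hut hp).1 _ (hut hp).2.1).measurableSet) hu_null hε
  let e : Fin F.card ≃ F := F.equivFin.symm
  refine ⟨F.card, fun i => (e i).1.1, fun i => (e i).1.2, fun i => hut (hFu (e i).2),
    fun i j hij => hu_disj (hFu (e i).2) (hFu (e j).2)
      fun h => hij (e.injective (Subtype.ext h)), ?_⟩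
  rwa [e.surjective.iUnion_comp fun p : F => B p.1.1 p.1.2,
    iUnion_subtype (· ∈ F) fun p => B p.1.1 p.1.2]

theorem hausdorffMeasure_lt_top_of_ahlforsRegularAt {X : Type*} [MetricSpace X]
    [MeasurableSpace X] [BorelSpace X] {S : Set X} (hS : IsCompact S) {d : ℕ} {η : ℝ} (hη : 0 < η)
    (h : ∀ y ∈ S, AhlforsRegularAt d S η y) : μH[d] S < ⊤ :=
  hS.measure_lt_top_of_nhdsWithin fun y hy =>
    ⟨S ∩ closedBall y η, inter_mem_nhdsWithin S (closedBall_mem_nhds y hη),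
      (h y hy η ⟨hη, le_rfl⟩).2.trans_lt ENNReal.ofReal_lt_top⟩

theorem AhlforsRegularAt.measure_closedBall_le_mul_measure_closedCapAt {E : Type*}
    [NormedAddCommGroup E] [NormedSpace ℝ E] [MeasurableSpace E] [BorelSpace E] {V : Set E}
    {l : E →L[ℝ] ℝ} {d : ℕ} {η r : ℝ} {y : E} (ha : AhlforsRegularAt d (frontier V) η y)
    (hq : QuadraticContact V l η y) (hη : η ≤ 1) (hr : 0 < r) (hrη : 3 * r ≤ η) :
    μH[d] (frontier V ∩ closedBall y (3 * r)) ≤ (η⁻¹ * 3 ^ d / (η * (η / 2) ^ d)).toNNReal *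
      μH[d] (frontier V ∩ closedCapAt V l y (η * r ^ 2)) := by
  have hη0 : 0 < η := by linarith
  have h_sub : frontier V ∩ closedBall y (η / 2 * r) ⊆
      frontier V ∩ closedCapAt V l y (η * r ^ 2) :=
    subset_inter inter_subset_left (hq.frontier_inter_closedBall_subset hη hr (by linarith))
  refine (ha.measure_inter_closedBall_le_mul three_pos (half_pos hη0) hr hrη
    (by nlinarith)).trans ?_
  gcongr _ * ?_
  exact measure_mono h_sub

section StrictlyConvexDomain

variable {N : ℕ} {D V W U : Set (EN N)} {ρ : EN N → ℝ} {x : EN N}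

theorem IsDefiningFunctionOn.contDiffAt (hρ : IsDefiningFunctionOn D ρ W) (hx : x ∈ closure D) :
    ContDiffAt ℝ 2 ρ x :=
  hρ.2.2.1.contDiffAt (hρ.1.mem_nhds (hρ.2.1 hx))

theorem IsDefiningFunctionOn.nonpos (hρ : IsDefiningFunctionOn D ρ W) (hx : x ∈ closure D) :
    ρ x ≤ 0 := by
  have h_maps : MapsTo ρ D (Iic 0) := fun z hz => (hρ.2.2.2.1.subset hz).2.le
  exact isClosed_Iic.closure_subset
    ((hρ.contDiffAt hx).continuousAt.continuousWithinAt.mem_closure hx h_maps)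

theorem IsDefiningFunctionOn.isOpen (hρ : IsDefiningFunctionOn D ρ W) : IsOpen D :=
  hρ.2.2.2.1 ▸ hρ.2.2.1.continuousOn.isOpen_inter_preimage hρ.1 isOpen_Iio

theorem IsDefiningFunctionOn.eq_zero (hρ : IsDefiningFunctionOn D ρ W) (hx : x ∈ frontier D) :
    ρ x = 0 := by
  rw [hρ.isOpen.frontier_eq] at hx
  refine (hρ.nonpos hx.1).antisymm (not_lt.1 fun h => hx.2 ?_)
  exact hρ.2.2.2.1.superset ⟨hρ.2.1 hx.1, h⟩

theorem IsDefiningFunctionOn.eventually_mem_frontier_iff (hρ : IsDefiningFunctionOn D ρ W)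
    (hx : x ∈ frontier D) : ∀ᶠ z in 𝓝 x, z ∈ frontier D ↔ ρ z = 0 := by
  have hx' := frontier_subset_closure hx
  have h_fderiv : ∀ᶠ z in 𝓝 x, fderiv ℝ ρ z ≠ 0 :=
    ((hρ.contDiffAt hx').continuousAt_fderiv two_ne_zero).eventually_ne (hρ.2.2.2.2 x hx)
  filter_upwards [h_fderiv, hρ.1.mem_nhds (hρ.2.1 hx')] with z h_fderiv hzW
  refine ⟨hρ.eq_zero, fun hz => ?_⟩
  -- A zero of `ρ` with nonzero derivative is not a local minimum.
  have h_neg : ∃ᶠ w in 𝓝 z, ρ w < 0 := by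
    have h_not_min : ¬ IsLocalMin ρ z := fun h_min => h_fderiv h_min.fderiv_eq_zero
    simpa [IsLocalMin, IsMinFilter, hz] using h_not_min
  have h_closure : z ∈ closure D := mem_closure_iff_frequently.2 <|
    (h_neg.and_eventually (hρ.1.mem_nhds hzW)).mono fun w hw => hρ.2.2.2.1.superset ⟨hw.2, hw.1⟩
  rw [hρ.isOpen.frontier_eq]
  exact ⟨h_closure, fun hzD => (hρ.2.2.2.1.subset hzD).2.ne hz⟩

theorem StrictlyConvexDomain.isCompact_frontier (hV : StrictlyConvexDomain V) :
    IsCompact (frontier V) :=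
  hV.2.1.isCompact_closure.of_isClosed_subset isClosed_frontier frontier_subset_closure

theorem StrictlyConvexDomain.exists_quadraticContact_ahlforsRegularAt {d : ℕ}
    (hV : StrictlyConvexDomain V) (hd : 2 * N = d + 1) :
    ∃ (l : EN N → EN N →L[ℝ] ℝ) (η : ℝ), 0 < η ∧ η ≤ 1 ∧ ∀ y ∈ frontier V,
      l y ≠ 0 ∧ QuadraticContact V (l y) η y ∧ AhlforsRegularAt d (frontier V) η y := by
  have h_compact := hV.isCompact_frontier
  obtain ⟨-, -, -, ρ, W, hρ, hH⟩ := hV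
  have h_finrank : Module.finrank ℝ (EN N) = d + 1 := by
    rw [← hd, ← Module.finrank_mul_finrank ℝ ℂ, Complex.finrank_real_complex,
      finrank_euclideanSpace_fin]
  obtain ⟨η, hη, h_uniform⟩ := exists_pos_forall_of_isCompact h_compact
    (P := fun η y => QuadraticContact V (fderiv ℝ ρ y) η y ∧ AhlforsRegularAt d (frontier V) η y)
    (fun _ _ _ hη' hle h => ⟨h.1.mono hη' hle, h.2.mono hη' hle⟩) fun x hx => by
      have h_contDiff := hρ.contDiffAt (frontier_subset_closure hx)
      obtain ⟨η₁, hη₁, h_contact⟩ := exists_eventually_quadraticContact h_contDiff (hH x hx)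
        (.of_forall fun _ => hρ.nonpos) (.of_forall fun _ => hρ.eq_zero)
      obtain ⟨η₂, hη₂, h_regular⟩ := exists_eventually_ahlforsRegularAt_of_hasStrictFDerivAt
        (h_contDiff.hasStrictFDerivAt two_ne_zero) (hρ.2.2.2.2 x hx) h_finrank
        (by simpa only [hρ.eq_zero hx] using hρ.eventually_mem_frontier_iff hx)
      have hη : 0 < min η₁ η₂ := lt_min hη₁ hη₂
      exact ⟨min η₁ η₂, hη, (h_contact.and h_regular).mono fun y h =>
        ⟨h.1.mono hη (min_le_left _ _), h.2.mono hη (min_le_right _ _)⟩⟩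
  have hη1 : 0 < min η 1 := lt_min hη one_pos
  exact ⟨fderiv ℝ ρ, min η 1, hη1, min_le_right _ _, fun y hy => ⟨hρ.2.2.2.2 y hy,
    (h_uniform y hy).1.mono hη1 (min_le_left _ _), (h_uniform y hy).2.mono hη1 (min_le_left _ _)⟩⟩

theorem StrictlyConvexDomain.exists_closedCaps_hausdorffMeasure_sdiff_lt {d : ℕ}
    (hV : StrictlyConvexDomain V) (hd : 2 * N = d + 1) (hU : IsOpen U) {ε : ℝ≥0∞} (hε : 0 < ε) :
    ∃ (n : ℕ) (Γ : Fin n → Set (EN N)), (∀ i, IsClosedCap V (Γ i) ∧ Γ i ⊆ U) ∧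
      (Pairwise fun i j => Disjoint (Γ i) (Γ j)) ∧
      μH[d] ((U ∩ frontier V) \ ⋃ i, Γ i) < ε := by
  obtain ⟨l, η, hη, hη1, h_geom⟩ := hV.exists_quadraticContact_ahlforsRegularAt hd
  have h_compact := hV.isCompact_frontier
  obtain ⟨⟨hV_open, -⟩, -, hV_conv, -⟩ := hV
  have h_closure : ∀ y ∈ frontier V, y ∈ closure V := fun _ hy => frontier_subset_closure hy
  have : IsFiniteMeasure (μH[d].restrict (frontier V)) :=
    isFiniteMeasure_restrict.2 (hausdorffMeasure_lt_top_of_ahlforsRegularAt h_compact hη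
      fun y hy => (h_geom y hy).2.2).ne
  have hR : 0 < η / 3 := by positivity
  have h_height : ∀ r ∈ Ioc 0 (η / 3), 0 < η * r ^ 2 := fun r hr => mul_pos hη (pow_pos hr.1 2)
  obtain ⟨n, x, r, h_caps, h_disj, h_small⟩ := exists_fin_disjoint_measure_sdiff_iUnion_lt
    (μ := μH[d].restrict (frontier V)) (B := fun y r => closedCapAt V (l y) y (η * r ^ 2))
    h_compact.measurableSet hU hR (fun _ _ _ _ => isClosed_closure)
    (fun y hy r hr => interior_closedCapAt_nonempty hV_open (h_closure y hy) (h_height r hr))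
    (fun y hy r hr => (h_geom y hy).2.1.closedCapAt_subset_closedBall hV_conv (h_closure y hy)
      hr.1 (by linarith [hr.1, hr.2]))
    (fun y hy r hr => by
      simp only [Measure.restrict_apply' h_compact.measurableSet, inter_comm _ (frontier V)]
      exact (h_geom y hy).2.2.measure_closedBall_le_mul_measure_closedCapAt (h_geom y hy).2.1 hη1
        hr.1 (by linarith [hr.2]))
    hε
  refine ⟨n, fun i => closedCapAt V (l (x i)) (x i) (η * r i ^ 2), fun i => ?_, h_disj, ?_⟩
  · obtain ⟨hx, hr, h_sub⟩ := h_caps i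
    exact ⟨isClosedCap_closedCapAt (h_geom _ hx).1 (h_closure _ hx) (h_height _ hr), h_sub⟩
  · rwa [Measure.restrict_eq_self _ (sdiff_subset.trans inter_subset_right)] at h_small

end StrictlyConvexDomain

/-- **Caps lemma.** Let `V` be a strictly convex domain and `U` a domain intersecting `bV`.
For every `ε > 0` there are finitely many pairwise disjoint closed caps `Γ_1, …, Γ_n` of `V`
contained in `U ∩ cl V` with `m((U ∩ bV) \ Γ) < ε` (where `m` is `(2N-1)`-dimensional
Hausdorff measure and `Γ = Γ_1 ∪ ⋯ ∪ Γ_n`); moreover `Γ ∪ K` is polynomially convex for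
every polynomially convex compact `K ⊆ V` disjoint from `Γ`. -/
theorem caps_lemma {N : ℕ} (V U : Set (EN N)) (hV : StrictlyConvexDomain V)
    (hU : IsDomainSet U) (hUV : (U ∩ frontier V).Nonempty) (ε : ℝ) (hε : 0 < ε) :
    ∃ (n : ℕ) (Γ : Fin n → Set (EN N)),
      (∀ i, IsClosedCap V (Γ i) ∧ Γ i ⊆ U ∩ closure V) ∧
      (∀ i j, i ≠ j → Disjoint (Γ i) (Γ j)) ∧
      (Measure.hausdorffMeasure (2 * (N:ℝ) - 1) : Measure (EN N))
        ((U ∩ frontier V) \ ⋃ i, Γ i) < ENNReal.ofReal ε ∧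
      ∀ K : Set (EN N), IsCompact K → PolynomiallyConvex K → K ⊆ V →
        Disjoint (⋃ i, Γ i) K → PolynomiallyConvex ((⋃ i, Γ i) ∪ K) := by
  obtain ⟨p, -, hp⟩ := hUV
  obtain ⟨d, hd⟩ : ∃ d, 2 * N = d + 1 := by
    rcases N.eq_zero_or_pos with rfl | hN
    · simp at hp
    · exact ⟨2 * N - 1, by omega⟩
  have hd_real : 2 * (N : ℝ) - 1 = d := sub_eq_of_eq_add (mod_cast hd)
  obtain ⟨n, Γ, hΓ, hdisj, h_small⟩ := hV.exists_closedCaps_hausdorffMeasure_sdiff_lt hd hU.1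
    (ENNReal.ofReal_pos.2 hε)
  obtain ⟨⟨hV_open, -⟩, hV_bdd, hV_conv, -⟩ := hV
  refine ⟨n, Γ, fun i => ⟨(hΓ i).1, subset_inter (hΓ i).2 (hΓ i).1.subset_closure⟩,
    fun i j hij => hdisj hij, hd_real ▸ h_small, fun K hK hKconv hKV hΓK => ?_⟩
  exact polynomiallyConvex_iUnion_closedCap_union hV_open hV_conv hV_bdd (fun i => (hΓ i).1) hdisj
    hK hKconv hKV hΓK
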